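/- Let Γ be a countable amenable group acting by homeomorphisms on compact metric spaces X and Y, with a continuous Γ-equivariant surjection π : X → Y. If there exists a Γ-invariant Borel probability measure ν on Ord(Γ) such that the action Γ ↷ X is ν-topologically predictable relative to π : X → Y, then the topological entropy of Γ ↷ X equals the topological entropy of Γ ↷ Y. -/

import Mathlib

/-!
The inequality `h(Y) ≤ h(X)` holds because open covers of `Y` pull back along `π`
(`topEnt_factor_le`).

For `h(X) ≤ h(Y)`, fix an open cover `U` of `X` with Lebesgue number `lam`. The number
`coverNum (coverJoin (F i) U)` is at most the size of a maximal set `E i` of points pairwise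
separated by `lam` at some time of `F i` (`exists_separated`). A point is described by its letters
`φ j (g • x)`, where `g` runs over `F i` and the finitely many functions `φ j` distinguish points
at distance `lam`. The letters are counted by revealing them along a random order.

Predictability determines a letter only up to a small error from its predecessors, so the letters
must come from a set in which a small error means equality. No choice of continuous `φ j` with
finitely many values is available, and a Cantor function `C` takes over: put `φ j = C (f j - s)`
with `f j` a rescaled distance. Since `C v` is a dyadic rational of denominator `2 ^ r` for all `v`
outside a set of measure at most `(2 / 3) ^ r`, averaging over the shift `s ∈ [0, 1]` and Fatou's
lemma give one `s` for which, for infinitely many `i`, all letters are dyadic and their ranks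
(exponents of the denominators) are bounded in mean square (`exists_shift`).

With `φ` fixed, for all orders outside a set of small measure a finite window `K` of predecessors,
together with `π x` up to `δ`, determines `φ j x` up to `2 ^ (-n)` (`exists_predictor`,
`exists_window`), hence exactly among dyadics of rank at most `n`. By invariance of `ν` some order
has this property at all but few positions of `F i` (`exists_order_few_bad`), and by the Følner
property few windows leave `F i` (`folner_boundary`). Give weight `1` to a letter of rank at most
`n` in a good position and weight `θ * 4 ^ (-rank)` to every other letter. Inside one element of
the joined cover of `Y` the weights available at each position sum to at most `1 + 4 * θ`, so the
total weight of all words is at most `(1 + 4 * θ) ^ (number of positions)` (`weighted_count`).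
Convexity of the exponential and the mean square bound on ranks turn this into
`log |E i| ≤ log (coverNum (coverJoin (F i) V)) + ε * |F i|` for infinitely many `i`
(`log_card_le`, `exists_cover_frequently`). As this applies to every Følner sequence, in particular
to a subsequence realising the upper limit for `U`, the entropies compare.
-/


open Filter MeasureTheory
open scoped ENNReal

/-- A Følner sequence for a countable group `Γ`. -/
def IsFolner {Γ : Type*} [Group Γ] (F : ℕ → Finset Γ) : Prop :=
  (∀ i, (F i).Nonempty) ∧
    ∀ g : Γ, Tendsto (fun i => ((((fun h => g * h) '' ↑(F i) \ (↑(F i) : Set Γ)).ncard : ℝ) / (F i).card))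
      atTop (nhds 0)

/-- An open cover of a topological space. -/
def IsOpenCover {X : Type*} [TopologicalSpace X] (U : Set (Set X)) : Prop :=
  (∀ u ∈ U, IsOpen u) ∧ ⋃₀ U = Set.univ

/-- Minimal cardinality of a finite subcover of a cover. -/
noncomputable def coverNum {X : Type*} (U : Set (Set X)) : ℕ :=
  sInf {n | ∃ V : Finset (Set X), ↑V ⊆ U ∧ ⋃₀ (V : Set (Set X)) = Set.univ ∧ V.card = n}

/-- The join `⋁_{g ∈ F} g⁻¹ 𝒰` of an open cover along a finite subset of the acting group. -/
def coverJoin {Γ X : Type*} [Group Γ] [MulAction Γ X] (F : Finset Γ) (U : Set (Set X)) :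
    Set (Set X) :=
  {v | ∃ u : Γ → Set X, (∀ g ∈ F, u g ∈ U) ∧ v = ⋂ g ∈ F, (fun x => g • x) ⁻¹' u g}

/-- Topological entropy of the action `Γ ↷ X` computed along the Følner sequence `F`. -/
noncomputable def topEnt (Γ X : Type*) [Group Γ] [TopologicalSpace X] [MulAction Γ X]
    (F : ℕ → Finset Γ) : ℝ≥0∞ :=
  ⨆ (U : Set (Set X)) (_ : IsOpenCover U),
    Filter.limsup
      (fun i => ENNReal.ofReal (Real.log (coverNum (coverJoin (F i) U)) / (F i).card)) atTop

/-- The space of binary relations `2^(Γ×Γ)`, as `Γ × Γ → Bool`.  The set of partial orders: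
relations which are antisymmetric and transitive. -/
def ordSet (Γ : Type*) [Group Γ] : Set (Γ × Γ → Bool) :=
  {R | (∀ x y : Γ, R (x, y) = true → R (y, x) = false) ∧
       (∀ x y z : Γ, R (x, y) = true → R (y, z) = true → R (x, z) = true)}

/-- The `Γ`-action on binary relations: `x (g·R) y ↔ (xg) R (yg)`. -/
def relAct {Γ : Type*} [Group Γ] (g : Γ) (R : Γ × Γ → Bool) : Γ × Γ → Bool :=
  fun p => R (p.1 * g, p.2 * g)

/-- An invariant random order on `Γ`: a `Γ`-invariant Borel probability measure on `Ord(Γ)`. -/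
def IsInvRandomOrder {Γ : Type*} [Group Γ] (ν : Measure (Γ × Γ → Bool)) : Prop :=
  IsProbabilityMeasure ν ∧ ν (ordSet Γ) = 1 ∧ ∀ g : Γ, Measure.map (relAct g) ν = ν

/-! ### A Cantor function and dyadic ranks -/

/-- The `r`-th piecewise linear approximation to the Cantor function, extended by `0` to the left of
`[0, 1]` and by `1` to the right, so that the self-similarity relation needs no case distinction. -/
noncomputable def cantorApprox : ℕ → ℝ → ℝ
  | 0, t => max 0 (min 1 t)
  | r + 1, t => (cantorApprox r (3 * t) + cantorApprox r (3 * t - 2)) / 2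

lemma cantorApprox_continuous (r : ℕ) : Continuous (cantorApprox r) := by
  induction r with
  | zero =>
    have h : cantorApprox 0 = fun t => max 0 (min 1 t) := rfl
    rw [h]; fun_prop
  | succ r ih =>
    have h : cantorApprox (r + 1)
        = fun t => (cantorApprox r (3 * t) + cantorApprox r (3 * t - 2)) / 2 := rfl
    rw [h]; fun_prop

lemma cantorApprox_of_nonpos (r : ℕ) : ∀ t ≤ 0, cantorApprox r t = 0 := by
  induction r with
  | zero => intro t ht; simp [cantorApprox, ht]
  | succ r ih =>
    intro t ht
    simp only [cantorApprox]
    rw [ih _ (by linarith), ih _ (by linarith)]; norm_num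

lemma cantorApprox_of_one_le (r : ℕ) : ∀ t, 1 ≤ t → cantorApprox r t = 1 := by
  induction r with
  | zero => intro t ht; simp [cantorApprox, ht]
  | succ r ih =>
    intro t ht
    simp only [cantorApprox]
    rw [ih _ (by linarith), ih _ (by linarith)]; norm_num

lemma cantorApprox_mem (r : ℕ) : ∀ t, 0 ≤ cantorApprox r t ∧ cantorApprox r t ≤ 1 := by
  induction r with
  | zero => intro t; simp [cantorApprox]
  | succ r ih =>
    intro t
    simp only [cantorApprox]
    have h1 := ih (3 * t)
    have h2 := ih (3 * t - 2)
    constructor <;> linarith [h1.1, h1.2, h2.1, h2.2]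

/-- Consecutive approximations are geometrically close: of the two rescaled copies, at most one is
non-constant near any given point, and the averaging halves its error. -/
lemma cantorApprox_dist (r : ℕ) :
    ∀ t, dist (cantorApprox r t) (cantorApprox (r + 1) t) ≤ 1 * (1 / 2 : ℝ) ^ r := by
  induction r with
  | zero =>
    intro t
    have h1 := cantorApprox_mem 0 t
    have h2 := cantorApprox_mem 1 t
    rw [Real.dist_eq, abs_le]
    constructor <;> norm_num <;> linarith [h1.1, h1.2, h2.1, h2.2]
  | succ r ih =>
    intro t
    rw [Real.dist_eq]
    have e : cantorApprox (r + 1) t - cantorApprox (r + 1 + 1) t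
      = ((cantorApprox r (3 * t) - cantorApprox (r + 1) (3 * t))
        + (cantorApprox r (3 * t - 2) - cantorApprox (r + 1) (3 * t - 2))) / 2 := by
      have h1 : ∀ k u, cantorApprox (k + 1) u
        = (cantorApprox k (3 * u) + cantorApprox k (3 * u - 2)) / 2 := fun _ _ => rfl
      rw [h1 r t, h1 (r + 1) t]; ring
    rw [e]
    have h1 := ih (3 * t)
    have h2 := ih (3 * t - 2)
    rw [Real.dist_eq, abs_le] at h1 h2
    rw [abs_le, pow_succ]
    rcases le_total t (1 / 2) with h | h
    · rw [cantorApprox_of_nonpos r _ (by linarith : 3 * t - 2 ≤ 0),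
        cantorApprox_of_nonpos (r + 1) _ (by linarith : 3 * t - 2 ≤ 0)]
      constructor <;> linarith [h1.1, h1.2]
    · rw [cantorApprox_of_one_le r _ (by linarith : 1 ≤ 3 * t),
        cantorApprox_of_one_le (r + 1) _ (by linarith : 1 ≤ 3 * t)]
      constructor <;> linarith [h2.1, h2.2]

/-- The Cantor function on `ℝ`, characterised by its values outside `[0, 1]` and by
self-similarity. -/
lemma exists_cantor : ∃ C : ℝ → ℝ, Continuous C ∧ (∀ t ≤ 0, C t = 0) ∧ (∀ t, 1 ≤ t → C t = 1) ∧
    (∀ t, C t = (C (3 * t) + C (3 * t - 2)) / 2) ∧ ∀ t, 0 ≤ C t ∧ C t ≤ 1 := by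
  have hc : ∀ t, ∃ a, Tendsto (fun r => cantorApprox r t) atTop (nhds a) := fun t =>
    cauchySeq_tendsto_of_complete
      (cauchySeq_of_le_geometric (1 / 2) 1 (by norm_num) (fun r => cantorApprox_dist r t))
  choose C hC using hc
  have hu : TendstoUniformly (fun r t => cantorApprox r t) C atTop := by
    rw [Metric.tendstoUniformly_iff]
    intro ε hε
    have h0 : Tendsto (fun r : ℕ => 1 * (1 / 2 : ℝ) ^ r / (1 - 1 / 2)) atTop (nhds 0) := by
      have := (tendsto_pow_atTop_nhds_zero_of_lt_one (r := (1 / 2 : ℝ))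
        (by norm_num) (by norm_num)).const_mul (2 : ℝ)
      rw [mul_zero] at this
      refine this.congr (fun r => ?_)
      ring
    filter_upwards [h0.eventually (gt_mem_nhds hε)] with r hr t
    rw [dist_comm]
    exact (dist_le_of_le_geometric_of_tendsto (1 / 2) 1 (by norm_num)
      (fun r => cantorApprox_dist r t) (hC t) r).trans_lt hr
  refine ⟨C, hu.continuous (Frequently.of_forall cantorApprox_continuous), ?_, ?_, ?_, ?_⟩
  · intro t ht
    refine tendsto_nhds_unique (hC t) ?_
    simp only [cantorApprox_of_nonpos _ t ht]; exact tendsto_const_nhds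
  · intro t ht
    refine tendsto_nhds_unique (hC t) ?_
    simp only [cantorApprox_of_one_le _ t ht]; exact tendsto_const_nhds
  · intro t
    refine tendsto_nhds_unique ((tendsto_add_atTop_iff_nat 1).2 (hC t)) ?_
    exact ((hC (3 * t)).add (hC (3 * t - 2))).div_const 2
  · intro t
    exact ⟨ge_of_tendsto' (hC t) fun r => (cantorApprox_mem r t).1,
      le_of_tendsto' (hC t) fun r => (cantorApprox_mem r t).2⟩

/-- `u` is a dyadic rational with denominator dividing `2 ^ r`. -/
def IsLevel (r : ℕ) (u : ℝ) : Prop := ∃ z : ℤ, 2 ^ r * u = z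

lemma IsLevel.mono {r k : ℕ} (h : r ≤ k) {u : ℝ} (hu : IsLevel r u) : IsLevel k u := by
  obtain ⟨z, hz⟩ := hu
  obtain ⟨d, rfl⟩ := Nat.exists_eq_add_of_le h
  refine ⟨2 ^ d * z, ?_⟩
  push_cast
  rw [← hz]; ring

/-- Dyadics of level `n` are `2 ^ (-n)`-separated. -/
lemma IsLevel.eq_of_abs_lt {n : ℕ} {u v : ℝ} (hu : IsLevel n u) (hv : IsLevel n v)
    (h : |u - v| < (1 / 2) ^ n) : u = v := by
  obtain ⟨a, ha⟩ := hu
  obtain ⟨b, hb⟩ := hv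
  have h2 : (0 : ℝ) < 2 ^ n := by positivity
  have h1 : |((a - b : ℤ) : ℝ)| < 1 := by
    push_cast
    rw [← ha, ← hb, ← mul_sub, abs_mul, abs_of_pos h2]
    calc _ < 2 ^ n * (1 / 2 : ℝ) ^ n := by gcongr
      _ = 1 := by rw [← mul_pow]; norm_num
  have h3 : a - b = 0 := by
    rw [← Int.cast_abs] at h1
    exact Int.abs_lt_one_iff.1 (by exact_mod_cast h1)
  have h4 : a = b := by omega
  subst h4
  exact mul_left_cancel₀ h2.ne' (ha.trans hb.symm)

open Classical in
/-- The exponent of the reduced denominator of a dyadic rational; the junk value `0` if `u` is not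
dyadic. -/
noncomputable def dyadicRank (u : ℝ) : ℕ := sInf {r | IsLevel r u}

open Classical in
/-- The sum of `r + 1` over all `r` such that `u` is not dyadic of level `r`. It is comparable to the
square of the rank for dyadic `u`, and infinite for other `u`. -/
noncomputable def dyadicCost (u : ℝ) : ℝ≥0∞ :=
  ∑' r : ℕ, if IsLevel r u then 0 else ((r : ℝ≥0∞) + 1)

lemma isLevel_dyadicRank {u : ℝ} (h : ∃ r, IsLevel r u) : IsLevel (dyadicRank u) u :=
  Nat.sInf_mem (s := {r | IsLevel r u}) h

lemma not_isLevel_of_lt {u : ℝ} {r : ℕ} (h : r < dyadicRank u) : ¬ IsLevel r u :=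
  Nat.notMem_of_lt_sInf (s := {r | IsLevel r u}) h

lemma sum_le_dyadicCost {u : ℝ} (N : ℕ) (h : ∀ r < N, ¬ IsLevel r u) :
    ((N : ℝ≥0∞)) ^ 2 ≤ 2 * dyadicCost u := by
  have h1 : ∑ r ∈ Finset.range N, ((r : ℝ≥0∞) + 1) ≤ dyadicCost u := by
    refine le_trans (le_of_eq ?_) (ENNReal.sum_le_tsum (Finset.range N))
    refine Finset.sum_congr rfl fun r hr => ?_
    rw [if_neg (h r (Finset.mem_range.1 hr))]
  have h2 : ∀ N : ℕ, N ^ 2 ≤ 2 * ∑ r ∈ Finset.range N, (r + 1) := by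
    intro N
    induction N with
    | zero => simp
    | succ N ih => rw [Finset.sum_range_succ]; nlinarith
  calc ((N : ℝ≥0∞)) ^ 2 ≤ 2 * ∑ r ∈ Finset.range N, ((r : ℝ≥0∞) + 1) := by exact_mod_cast h2 N
    _ ≤ _ := by gcongr

lemma dyadicRank_sq_le (u : ℝ) : ((dyadicRank u : ℝ≥0∞)) ^ 2 ≤ 2 * dyadicCost u :=
  sum_le_dyadicCost _ fun _ hr => not_isLevel_of_lt hr

lemma exists_isLevel_of_dyadicCost_lt_top {u : ℝ} (h : dyadicCost u < ⊤) :
    ∃ r, IsLevel r u := by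
  by_contra! hn
  obtain ⟨N, hN⟩ := ENNReal.exists_nat_gt (ENNReal.mul_lt_top (a := 2) (by simp) h).ne
  have h1 := sum_le_dyadicCost (u := u) N (fun r _ => hn r)
  have h2 : (N : ℝ≥0∞) ≤ (N : ℝ≥0∞) ^ 2 := by exact_mod_cast Nat.le_self_pow (by norm_num) N
  exact absurd (h2.trans h1) (not_le.2 hN)

/-- There are at most `2 ^ r + 1` dyadics of rank `r` in `[0, 1]`, so the weights `4 ^ (-rank)` are
summable. -/
lemma sum_four_pow_rank_le (T : Finset ℝ) (hT : ∀ u ∈ T, (0 ≤ u ∧ u ≤ 1) ∧ ∃ r, IsLevel r u) :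
    ∑ u ∈ T, (1 / 4 : ℝ) ^ dyadicRank u ≤ 4 := by
  classical
  have hcard : ∀ r : ℕ, ((T.filter (fun u => dyadicRank u = r)).card : ℝ) ≤ 2 * 2 ^ r := by
    intro r
    have h1 : (T.filter (fun u => dyadicRank u = r)).card ≤ (Finset.Icc (0 : ℤ) (2 ^ r)).card := by
      refine Finset.card_le_card_of_injOn (fun u => ⌊2 ^ r * u⌋) ?_ ?_
      · intro u hu
        have hu := Finset.mem_filter.1 (Finset.mem_coe.1 hu)
        have h01 := (hT u hu.1).1
        have hp : (0 : ℝ) < 2 ^ r := by positivity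
        refine Finset.mem_coe.2 (Finset.mem_Icc.2 ⟨Int.floor_nonneg.2 (by nlinarith), ?_⟩)
        have : (⌊2 ^ r * u⌋ : ℝ) ≤ 2 ^ r := (Int.floor_le _).trans (by nlinarith)
        exact_mod_cast this
      · intro u hu v hv huv
        have hu := Finset.mem_filter.1 (Finset.mem_coe.1 hu)
        have hv := Finset.mem_filter.1 (Finset.mem_coe.1 hv)
        obtain ⟨a, ha⟩ := isLevel_dyadicRank (hT u hu.1).2
        obtain ⟨b, hb⟩ := isLevel_dyadicRank (hT v hv.1).2
        rw [hu.2] at ha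
        rw [hv.2] at hb
        simp only [ha, hb, Int.floor_intCast] at huv
        rw [← huv] at hb
        exact mul_left_cancel₀ (by positivity) (ha.trans hb.symm)
    have h2 : (Finset.Icc (0 : ℤ) (2 ^ r)).card ≤ 2 * 2 ^ r := by
      have : (1 : ℕ) ≤ 2 ^ r := Nat.one_le_two_pow
      rw [Int.card_Icc]
      have h3 : ((2 : ℤ) ^ r + 1 - 0).toNat = 2 ^ r + 1 := by
        have : ((2 : ℤ) ^ r + 1 - 0) = ((2 ^ r + 1 : ℕ) : ℤ) := by push_cast; ring
        rw [this, Int.toNat_natCast]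
      omega
    exact_mod_cast h1.trans h2
  set N := T.sup dyadicRank + 1 with hN
  have hmaps : ∀ u ∈ T, dyadicRank u ∈ Finset.range N := fun u hu =>
    Finset.mem_range.2 (Nat.lt_succ_of_le (Finset.le_sup (f := dyadicRank) hu))
  rw [← Finset.sum_fiberwise_of_maps_to hmaps]
  calc _ ≤ ∑ r ∈ Finset.range N, 2 * (1 / 2 : ℝ) ^ r := by
        refine Finset.sum_le_sum fun r _ => ?_
        rw [Finset.sum_congr rfl (g := fun _ => (1 / 4 : ℝ) ^ r)
          (fun u hu => by rw [(Finset.mem_filter.1 hu).2]), Finset.sum_const, nsmul_eq_mul]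
        calc _ ≤ 2 * 2 ^ r * (1 / 4 : ℝ) ^ r := by gcongr; exact hcard r
          _ = _ := by rw [mul_assoc, ← mul_pow]; norm_num
    _ ≤ 4 := by
        rw [← Finset.mul_sum]
        have := sum_geometric_two_le N
        linarith

lemma measurableSet_isLevel {C : ℝ → ℝ} (hC : Continuous C) (r : ℕ) :
    MeasurableSet {v | IsLevel r (C v)} := by
  have : {v | IsLevel r (C v)} = (fun v => 2 ^ r * C v) ⁻¹' (Set.range ((↑) : ℤ → ℝ)) := by
    ext v; simp [IsLevel, eq_comm]
  rw [this]
  exact (by fun_prop : Continuous fun v => 2 ^ r * C v).measurable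
    (Set.countable_range _).measurableSet

/-- By self-similarity, `C` fails to be dyadic of level `r + 1` only on two copies, scaled by `1 / 3`,
of the set where it fails to be dyadic of level `r`. -/
lemma volume_not_isLevel {C : ℝ → ℝ} (h0 : ∀ t ≤ 0, C t = 0)
    (h1 : ∀ t, 1 ≤ t → C t = 1) (hs : ∀ t, C t = (C (3 * t) + C (3 * t - 2)) / 2) (r : ℕ) :
    volume {v | ¬ IsLevel r (C v)} ≤ ENNReal.ofReal ((2 / 3) ^ r) := by
  induction r with
  | zero =>
    calc _ ≤ volume (Set.Ioo (0 : ℝ) 1) := by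
          refine measure_mono fun v hv => ?_
          by_contra hn
          rw [Set.mem_Ioo, not_and_or, not_lt, not_lt] at hn
          rcases hn with h | h
          · exact hv ⟨0, by rw [h0 v h]; simp⟩
          · exact hv ⟨1, by rw [h1 v h]; simp⟩
      _ = _ := by simp
  | succ r ih =>
    set N := {v | ¬ IsLevel r (C v)} with hN
    have hsub : {v | ¬ IsLevel (r + 1) (C v)} ⊆
        ((fun v => 3 * v) ⁻¹' N) ∪ ((fun v => 3 * v) ⁻¹' ((fun v => v + (-2)) ⁻¹' N)) := by
      intro v hv
      by_contra hn
      simp only [Set.mem_union, Set.mem_preimage, hN, Set.mem_ofPred_eq, not_or, not_not] at hn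
      obtain ⟨⟨a, ha⟩, ⟨b, hb⟩⟩ := hn
      refine hv ⟨a + b, ?_⟩
      rw [← sub_eq_add_neg] at hb
      rw [hs v]
      push_cast
      rw [← ha, ← hb]; ring
    refine (measure_mono hsub).trans ((measure_union_le _ _).trans ?_)
    rw [Real.volume_preimage_mul_left (by norm_num), Real.volume_preimage_mul_left (by norm_num),
      measure_preimage_add_right, ← two_mul]
    calc _ ≤ 2 * (ENNReal.ofReal |(3 : ℝ)⁻¹| * ENNReal.ofReal ((2 / 3) ^ r)) := by gcongr
      _ = _ := by
        rw [show (2 : ℝ≥0∞) = ENNReal.ofReal 2 by simp, ← ENNReal.ofReal_mul (by positivity),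
          ← ENNReal.ofReal_mul (by positivity)]
        congr 1
        rw [abs_of_pos (by norm_num)]
        ring

open Classical in
lemma measurable_dyadicCost_comp {C : ℝ → ℝ} (hC : Continuous C) :
    Measurable fun v => dyadicCost (C v) := by
  unfold dyadicCost
  refine Measurable.tsum fun r => ?_
  exact Measurable.ite (measurableSet_isLevel hC r) measurable_const measurable_const

open Classical in
lemma lintegral_dyadicCost_lt_top {C : ℝ → ℝ} (hC : Continuous C) (h0 : ∀ t ≤ 0, C t = 0)
    (h1 : ∀ t, 1 ≤ t → C t = 1) (hs : ∀ t, C t = (C (3 * t) + C (3 * t - 2)) / 2) :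
    ∫⁻ v, dyadicCost (C v) < ⊤ := by
  unfold dyadicCost
  rw [lintegral_tsum fun r =>
    (Measurable.ite (measurableSet_isLevel hC r) measurable_const measurable_const).aemeasurable]
  have hle : ∀ r : ℕ, (∫⁻ v, if IsLevel r (C v) then 0 else ((r : ℝ≥0∞) + 1))
      ≤ ENNReal.ofReal ((r + 1) * (2 / 3) ^ r) := by
    intro r
    have e : (fun v => if IsLevel r (C v) then 0 else ((r : ℝ≥0∞) + 1))
        = Set.indicator {v | ¬ IsLevel r (C v)} fun _ => ((r : ℝ≥0∞) + 1) := by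
      ext v; by_cases h : IsLevel r (C v) <;> simp [h]
    have hm : MeasurableSet {v | ¬ IsLevel r (C v)} := (measurableSet_isLevel hC r).compl
    rw [e, lintegral_indicator_const hm,
      ENNReal.ofReal_mul (by positivity)]
    refine mul_le_mul' (le_of_eq ?_) (volume_not_isLevel h0 h1 hs r)
    rw [ENNReal.ofReal_add (by positivity) (by norm_num)]; simp
  refine (ENNReal.tsum_le_tsum hle).trans_lt ?_
  have hsum : Summable fun r : ℕ => ((r : ℝ) + 1) * (2 / 3) ^ r := by
    have a := summable_pow_mul_geometric_of_norm_lt_one 1 (r := (2 / 3 : ℝ)) (by norm_num)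
    have b := summable_geometric_of_norm_lt_one (K := ℝ) (x := 2 / 3) (by norm_num)
    refine (a.add b).congr fun r => ?_
    ring
  exact hsum.tsum_ofReal_lt_top

/-! ### Covers, factors and separated sets -/

lemma coverNum_le {Z : Type*} {U : Set (Set Z)} (V : Finset (Set Z)) (h : ↑V ⊆ U)
    (hV : ⋃₀ (V : Set (Set Z)) = Set.univ) : coverNum U ≤ V.card :=
  Nat.sInf_le ⟨V, h, hV, rfl⟩

lemma isOpenCover_coverJoin {Γ Z : Type*} [Group Γ] [TopologicalSpace Z] [MulAction Γ Z]
    (hc : ∀ g : Γ, Continuous fun z : Z => g • z) (F : Finset Γ) {U : Set (Set Z)}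
    (hU : IsOpenCover U) : IsOpenCover (coverJoin F U) := by
  refine ⟨?_, ?_⟩
  · rintro _ ⟨u, hu, rfl⟩
    exact isOpen_biInter_finset fun g hg => (hU.1 _ (hu g hg)).preimage (hc g)
  · refine Set.eq_univ_of_forall fun z => ?_
    have h : ∀ g : Γ, ∃ u ∈ U, g • z ∈ u := fun g =>
      Set.mem_sUnion.1 (hU.2 ▸ Set.mem_univ (g • z))
    choose u hu hz using h
    exact Set.mem_sUnion.2 ⟨_, ⟨u, fun g _ => hu g, rfl⟩, Set.mem_iInter₂.2 fun g _ => hz g⟩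

lemma exists_subcover {Z : Type*} [TopologicalSpace Z] [CompactSpace Z] {U : Set (Set Z)}
    (hU : IsOpenCover U) : ∃ V : Finset (Set Z), ↑V ⊆ U ∧ ⋃₀ (V : Set (Set Z)) = Set.univ ∧
      V.card = coverNum U := by
  have hne : {n | ∃ V : Finset (Set Z), ↑V ⊆ U ∧ ⋃₀ (V : Set (Set Z)) = Set.univ ∧
      V.card = n}.Nonempty := by
    obtain ⟨T, hT⟩ := isCompact_univ.elim_finite_subcover (fun u : U => (u : Set Z))
      (fun u => hU.1 _ u.2) (by rw [← Set.sUnion_eq_iUnion]; exact hU.2.ge)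
    refine ⟨_, T.map (Function.Embedding.subtype _), ?_, ?_, rfl⟩
    · intro v hv
      obtain ⟨u, -, rfl⟩ := Finset.mem_map.1 (Finset.mem_coe.1 hv)
      exact u.2
    · refine Set.eq_univ_of_forall fun z => ?_
      obtain ⟨u, hu, hz⟩ := Set.mem_iUnion₂.1 (hT (Set.mem_univ z))
      exact Set.mem_sUnion.2 ⟨u, Finset.mem_coe.2 (Finset.mem_map.2 ⟨u, hu, rfl⟩), hz⟩
  exact Nat.sInf_mem hne

/-- Covers pull back along the factor map without decreasing the cover numbers of their joins. -/
lemma coverNum_factor_le {Γ X Y : Type*} [Group Γ]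
    [TopologicalSpace X] [CompactSpace X] [MulAction Γ X] [TopologicalSpace Y] [MulAction Γ Y]
    (hcX : ∀ g : Γ, Continuous fun x : X => g • x)
    (π : X → Y) (hπc : Continuous π) (hπsurj : Function.Surjective π)
    (hπeq : ∀ (g : Γ) (x : X), π (g • x) = g • π x) (F : Finset Γ) {V : Set (Set Y)}
    (hV : IsOpenCover V) :
    IsOpenCover ((fun v => π ⁻¹' v) '' V) ∧
    coverNum (coverJoin F V) ≤ coverNum (coverJoin F ((fun v => π ⁻¹' v) '' V)) := by
  classical
  have hU : IsOpenCover ((fun v => π ⁻¹' v) '' V) := by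
    refine ⟨?_, ?_⟩
    · rintro _ ⟨v, hv, rfl⟩; exact (hV.1 v hv).preimage hπc
    · refine Set.eq_univ_of_forall fun x => ?_
      obtain ⟨v, hv, hx⟩ := Set.mem_sUnion.1 (hV.2 ▸ Set.mem_univ (π x))
      exact Set.mem_sUnion.2 ⟨_, ⟨v, hv, rfl⟩, hx⟩
  refine ⟨hU, ?_⟩
  obtain ⟨W, hW, hWc, hcard⟩ := exists_subcover (isOpenCover_coverJoin hcX F hU)
  have hlift : ∀ w ∈ W, ∃ v ∈ coverJoin F V, w = π ⁻¹' v := by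
    intro w hw
    obtain ⟨u, hu, rfl⟩ := hW hw
    choose! v hv using hu
    refine ⟨_, ⟨v, fun g hg => (hv g hg).1, rfl⟩, ?_⟩
    ext x
    simp only [Set.mem_iInter, Set.mem_preimage]
    refine forall₂_congr fun g hg => ?_
    rw [← (hv g hg).2, Set.mem_preimage, hπeq]
  choose! l hl hl' using hlift
  rw [← hcard]
  refine (coverNum_le (W.image l) ?_ ?_).trans Finset.card_image_le
  · intro v hv
    obtain ⟨w, hw, rfl⟩ := Finset.mem_image.1 (Finset.mem_coe.1 hv)
    exact hl w hw
  · refine Set.eq_univ_of_forall fun y => ?_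
    obtain ⟨x, rfl⟩ := hπsurj y
    obtain ⟨w, hw, hx⟩ := Set.mem_sUnion.1 (hWc ▸ Set.mem_univ x)
    refine Set.mem_sUnion.2 ⟨l w, Finset.mem_coe.2 (Finset.mem_image_of_mem l hw), ?_⟩
    rw [hl' w hw] at hx
    exact hx

lemma topEnt_factor_le {Γ X Y : Type*} [Group Γ]
    [TopologicalSpace X] [CompactSpace X] [MulAction Γ X] [TopologicalSpace Y] [MulAction Γ Y]
    (hcX : ∀ g : Γ, Continuous fun x : X => g • x)
    (π : X → Y) (hπc : Continuous π) (hπsurj : Function.Surjective π)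
    (hπeq : ∀ (g : Γ) (x : X), π (g • x) = g • π x) (F : ℕ → Finset Γ) :
    topEnt Γ Y F ≤ topEnt Γ X F := by
  refine iSup₂_le fun V hV => ?_
  have h := fun i => coverNum_factor_le hcX π hπc hπsurj hπeq (F i) hV
  refine le_trans ?_ (le_iSup₂ (f := fun (U : Set (Set X)) (_ : IsOpenCover U) =>
    Filter.limsup (fun i => ENNReal.ofReal
      (Real.log (coverNum (coverJoin (F i) U)) / (F i).card)) atTop) _ (h 0).1)
  refine limsup_le_limsup (Eventually.of_forall fun i => ?_)
  refine ENNReal.ofReal_le_ofReal (div_le_div_of_nonneg_right ?_ (Nat.cast_nonneg _))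
  rcases Nat.eq_zero_or_pos (coverNum (coverJoin (F i) V)) with h0 | h0
  · rw [h0]; simpa using Real.log_natCast_nonneg _
  · exact Real.log_le_log (by exact_mod_cast h0) (by exact_mod_cast (h i).2)

/-- A maximal separated set: its dynamical balls of radius `lam` are contained in elements of the
joined cover and cover the space. -/
lemma exists_separated {Γ X : Type*} [Group Γ] [MetricSpace X] [CompactSpace X] [MulAction Γ X]
    (hcX : ∀ g : Γ, Continuous fun x : X => g • x) {U : Set (Set X)} {lam : ℝ} (hlam : 0 < lam)
    (hU : ∀ x : X, ∃ u ∈ U, Metric.ball x lam ⊆ u) (F : Finset Γ) :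
    ∃ E : Finset X, coverNum (coverJoin F U) ≤ E.card ∧
      ∀ x ∈ E, ∀ x' ∈ E, x ≠ x' → ∃ g ∈ F, lam ≤ dist (g • x) (g • x') := by
  classical
  set Sep : Finset X → Prop := fun E => ∀ x ∈ E, ∀ x' ∈ E, x ≠ x' →
    ∃ g ∈ F, lam ≤ dist (g • x) (g • x') with hSep
  have hbound : ∃ N : ℕ, ∀ E, Sep E → E.card ≤ N := by
    have hcov : IsOpenCover {b : Set X | ∃ x, b = Metric.ball x (lam / 2)} := by
      refine ⟨?_, ?_⟩
      · rintro _ ⟨x, rfl⟩; exact Metric.isOpen_ball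
      · exact Set.eq_univ_of_forall fun x => Set.mem_sUnion.2
          ⟨_, ⟨x, rfl⟩, Metric.mem_ball_self (by positivity)⟩
    obtain ⟨W, hW, hWc, -⟩ := exists_subcover (isOpenCover_coverJoin hcX F hcov)
    refine ⟨W.card, fun E hE => ?_⟩
    have hw : ∀ x : X, ∃ w ∈ W, x ∈ w := fun x => by
      obtain ⟨w, hw, hx⟩ := Set.mem_sUnion.1 (hWc ▸ Set.mem_univ x)
      exact ⟨w, Finset.mem_coe.1 hw, hx⟩
    choose w hwW hxw using hw
    refine Finset.card_le_card_of_injOn w (fun x _ => hwW x) ?_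
    intro x hx x' hx' hxx'
    by_contra hne
    obtain ⟨g, hg, hd⟩ := hE x hx x' hx' hne
    obtain ⟨u, hu, he⟩ := hW (hwW x)
    obtain ⟨c, hc⟩ := hu g hg
    have h1 : g • x ∈ u g := Set.mem_iInter₂.1 (he ▸ hxw x) g hg
    have h2 : g • x' ∈ u g := by
      have := hxw x'
      rw [← hxx', he] at this
      exact Set.mem_iInter₂.1 this g hg
    rw [hc, Metric.mem_ball] at h1 h2
    have := dist_triangle_right (g • x) (g • x') c
    linarith
  obtain ⟨N, hN⟩ := hbound
  have hSe : Sep ∅ := by intro x hx; simp at hx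
  have hne : {n | ∃ E, Sep E ∧ E.card = n}.Nonempty := ⟨0, ∅, hSe, rfl⟩
  have hbdd : BddAbove {n | ∃ E, Sep E ∧ E.card = n} :=
    ⟨N, by rintro _ ⟨E, hE, rfl⟩; exact hN E hE⟩
  obtain ⟨E, hE, hEc⟩ := Nat.sSup_mem hne hbdd
  refine ⟨E, ?_, hE⟩
  have hclose : ∀ x : X, ∃ e ∈ E, ∀ g ∈ F, dist (g • x) (g • e) < lam := by
    intro x
    by_contra! hn
    have hx : x ∉ E := fun hx => by
      obtain ⟨g, hg, h⟩ := hn x hx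
      rw [dist_self] at h
      linarith
    have hS : Sep (insert x E) := by
      intro a ha b hb hab
      rcases Finset.mem_insert.1 ha with rfl | ha' <;>
        rcases Finset.mem_insert.1 hb with rfl | hb'
      · exact absurd rfl hab
      · exact hn b hb'
      · obtain ⟨g, hg, h⟩ := hn a ha'
        exact ⟨g, hg, by rwa [dist_comm]⟩
      · exact hE a ha' b hb' hab
    have : (insert x E).card ≤ E.card := hEc ▸ le_csSup hbdd ⟨_, hS, rfl⟩
    rw [Finset.card_insert_of_notMem hx] at this
    omega
  choose u huU hu using hU
  refine (coverNum_le (E.image fun e => ⋂ g ∈ F, (fun x => g • x) ⁻¹' u (g • e)) ?_ ?_).trans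
    Finset.card_image_le
  · intro v hv
    obtain ⟨e, he, rfl⟩ := Finset.mem_image.1 (Finset.mem_coe.1 hv)
    exact ⟨fun g => u (g • e), fun g _ => huU _, rfl⟩
  · refine Set.eq_univ_of_forall fun x => ?_
    obtain ⟨e, he, h⟩ := hclose x
    refine Set.mem_sUnion.2 ⟨_, Finset.mem_coe.2 (Finset.mem_image_of_mem _ he), ?_⟩
    exact Set.mem_iInter₂.2 fun g hg => hu _ (Metric.mem_ball.2 (h g hg))

/-! ### Weighted counting along an order -/

/-- Weighted counting of words indexed by a finite partially ordered set of positions: if, given the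
letters at preceding positions, the weights of the possible letters at each position sum to at most
`κ`, then the total weight of all words is at most `κ ^ (number of positions)`. The induction
splits on the letter at a minimal position among those not yet revealed, so no linear extension of
the order is needed. -/
lemma weighted_count {P α β : Type*} (prec : P → P → Prop)
    (htrans : ∀ a b c, prec a b → prec b c → prec a c) (hirr : ∀ a, ¬ prec a a)
    (Pos : Finset P) (E : Finset α) (a : α → P → β) (w : P → β → ℝ) (κ : ℝ)
    (hw : ∀ p v, 0 ≤ w p v) (hκ : 0 ≤ κ)
    (hinj : ∀ x ∈ E, ∀ x' ∈ E, (∀ p ∈ Pos, a x p = a x' p) → x = x')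
    (hloc : ∀ p ∈ Pos, ∀ T : Finset β, (∀ v ∈ T, ∃ x ∈ E, a x p = v) →
      (∀ v ∈ T, ∀ v' ∈ T, ∃ x ∈ E, ∃ x' ∈ E, a x p = v ∧ a x' p = v' ∧
        ∀ q ∈ Pos, prec q p → a x q = a x' q) → ∑ v ∈ T, w p v ≤ κ) :
    ∑ x ∈ E, ∏ p ∈ Pos, w p (a x p) ≤ κ ^ Pos.card := by
  classical
  have key : ∀ n : ℕ, ∀ Q ⊆ Pos, Q.card = n → ∀ E' ⊆ E,
      (∀ x ∈ E', ∀ x' ∈ E', ∀ p ∈ Pos, p ∉ Q → a x p = a x' p) →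
      ∑ x ∈ E', ∏ p ∈ Q, w p (a x p) ≤ κ ^ n := by
    intro n
    induction n with
    | zero =>
      intro Q _ hQ E' hE' hag
      rw [Finset.card_eq_zero] at hQ
      subst hQ
      have h1 : E'.card ≤ 1 := Finset.card_le_one.2 fun x hx x' hx' =>
        hinj x (hE' hx) x' (hE' hx') fun p hp => hag x hx x' hx' p hp (by simp)
      simpa using h1
    | succ n ih =>
      intro Q hQP hQ E' hE' hag
      obtain ⟨p, hpQ, hmin⟩ : ∃ p ∈ Q, ∀ q ∈ Q, ¬ prec q p := by
        have hwf : WellFounded (fun x y : Q => prec x y) := by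
          have : IsTrans Q (fun x y : Q => prec x y) := ⟨fun x y z => htrans x y z⟩
          have : Std.Irrefl (fun x y : Q => prec x y) := ⟨fun x => hirr x⟩
          exact Finite.wellFounded_of_trans_of_irrefl _
        have hne : (Set.univ : Set Q).Nonempty := by
          obtain ⟨q, hq⟩ := Finset.card_pos.1 (by omega : 0 < Q.card)
          exact ⟨⟨q, hq⟩, trivial⟩
        refine ⟨hwf.min Set.univ hne, Subtype.coe_prop _, fun q hq => ?_⟩
        exact hwf.not_lt_min Set.univ (x := ⟨q, hq⟩) trivial
      have hmaps : ∀ x ∈ E', a x p ∈ E'.image (fun x => a x p) := fun x hx =>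
        Finset.mem_image_of_mem _ hx
      rw [← Finset.sum_fiberwise_of_maps_to hmaps]
      calc _ ≤ ∑ v ∈ E'.image (fun x => a x p), w p v * κ ^ n := by
            refine Finset.sum_le_sum fun v _ => ?_
            have e : ∀ x ∈ E'.filter (fun x => a x p = v), ∏ q ∈ Q, w q (a x q)
                = w p v * ∏ q ∈ Q.erase p, w q (a x q) := by
              intro x hx
              rw [← Finset.mul_prod_erase Q _ hpQ, (Finset.mem_filter.1 hx).2]
            rw [Finset.sum_congr rfl e, ← Finset.mul_sum]
            refine mul_le_mul_of_nonneg_left ?_ (hw p v)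
            refine ih _ ((Finset.erase_subset _ _).trans hQP)
              (by rw [Finset.card_erase_of_mem hpQ, hQ]; rfl) _
              ((Finset.filter_subset _ _).trans hE') ?_
            intro x hx x' hx' q hq hqQ
            rw [Finset.mem_filter] at hx hx'
            by_cases hqp : q = p
            · rw [hqp, hx.2, hx'.2]
            · exact hag x hx.1 x' hx'.1 q hq fun h => hqQ (Finset.mem_erase.2 ⟨hqp, h⟩)
        _ ≤ κ * κ ^ n := by
            rw [← Finset.sum_mul]
            refine mul_le_mul_of_nonneg_right ?_ (pow_nonneg hκ n)
            refine hloc p (hQP hpQ) _ ?_ ?_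
            · intro v hv
              obtain ⟨x, hx, rfl⟩ := Finset.mem_image.1 hv
              exact ⟨x, hE' hx, rfl⟩
            · intro v hv v' hv'
              obtain ⟨x, hx, rfl⟩ := Finset.mem_image.1 hv
              obtain ⟨x', hx', rfl⟩ := Finset.mem_image.1 hv'
              exact ⟨x, hE' hx, x', hE' hx', rfl, rfl, fun q hq hqp =>
                hag x hx x' hx' q hq fun h => hmin q h hqp⟩
        _ = κ ^ (n + 1) := by ring
  exact key _ Pos subset_rfl rfl E subset_rfl fun x _ x' _ p hp hn => absurd hp hn

/-- Jensen's inequality for the exponential, in the form: a bound on the mean of `c` bounds the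
mean of `exp (-c)` from below. -/
lemma card_mul_exp_le {α : Type*} (E : Finset α) (c : α → ℝ) (A : ℝ)
    (h : ∑ x ∈ E, c x ≤ A * E.card) : E.card * Real.exp (-A) ≤ ∑ x ∈ E, Real.exp (-c x) := by
  have h1 : ∀ x ∈ E, Real.exp (-A) * (A - c x + 1) ≤ Real.exp (-c x) := by
    intro x _
    have h2 := Real.add_one_le_exp (A - c x)
    calc _ ≤ Real.exp (-A) * Real.exp (A - c x) := by gcongr
      _ = _ := by rw [← Real.exp_add]; congr 1; ring
  refine le_trans ?_ (Finset.sum_le_sum h1)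
  rw [← Finset.mul_sum, mul_comm]
  refine mul_le_mul_of_nonneg_left ?_ (Real.exp_pos _).le
  rw [Finset.sum_add_distrib, Finset.sum_sub_distrib]
  simp only [Finset.sum_const, nsmul_eq_mul, mul_one]
  linarith

open Classical in
/-- The weight of the letter `v` at a position which is predictable up to `2 ^ (-n)` if `good`
holds. -/
noncomputable def letterWeight (θ : ℝ) (n : ℕ) (good : Prop) (v : ℝ) : ℝ :=
  if good ∧ dyadicRank v ≤ n then 1 else θ * (1 / 4) ^ dyadicRank v

/-- At a good position only one letter of rank at most `n` is possible, and it contributes `1`; all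
other letters contribute at most `4 * θ` together. -/
lemma sum_letterWeight_le {θ : ℝ} (hθ : 0 < θ) (n : ℕ) (good : Prop) (T : Finset ℝ)
    (hT : ∀ u ∈ T, (0 ≤ u ∧ u ≤ 1) ∧ ∃ r, IsLevel r u)
    (hone : good → ∀ u ∈ T, ∀ v ∈ T, dyadicRank u ≤ n → dyadicRank v ≤ n → u = v) :
    ∑ v ∈ T, letterWeight θ n good v ≤ 1 + 4 * θ := by
  classical
  have h1 : ∀ v ∈ T, letterWeight θ n good v
      ≤ (if good ∧ dyadicRank v ≤ n then 1 else 0) + θ * (1 / 4) ^ dyadicRank v := by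
    intro v _
    have : 0 ≤ θ * (1 / 4) ^ dyadicRank v := by positivity
    unfold letterWeight
    split_ifs <;> linarith
  refine (Finset.sum_le_sum h1).trans ?_
  rw [Finset.sum_add_distrib, ← Finset.mul_sum]
  refine add_le_add ?_ ?_
  · rw [Finset.sum_boole]
    have : (T.filter fun v => good ∧ dyadicRank v ≤ n).card ≤ 1 := by
      refine Finset.card_le_one.2 fun u hu v hv => ?_
      rw [Finset.mem_filter] at hu hv
      exact hone hu.2.1 u hu.1 v hv.1 hu.2.2 hv.2.2
    exact_mod_cast this
  · have := sum_four_pow_rank_le T hT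
    nlinarith

/-- The cost `-log` of a weight is bounded by a constant at bad positions plus a small multiple of the
squared rank. At good positions only letters of rank above `n` have a cost, and for those
`rank ≤ rank ^ 2 / n`. -/
lemma letterWeight_eq_exp {θ : ℝ} (hθ : 0 < θ) (hθ1 : θ ≤ 1) {n : ℕ} (hn : 1 ≤ n)
    (good : Prop) [Decidable good] (v : ℝ) : ∃ c : ℝ, letterWeight θ n good v = Real.exp (-c) ∧
      c ≤ (if good then 0 else (-Real.log θ + n * Real.log 4)) +
        (-Real.log θ + Real.log 4) * ((dyadicRank v : ℝ) ^ 2 / n) := by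
  have hl : Real.log θ ≤ 0 := Real.log_nonpos hθ.le hθ1
  have h4 : 0 < Real.log 4 := Real.log_pos (by norm_num)
  have hn' : (1 : ℝ) ≤ n := by exact_mod_cast hn
  have hq : 0 ≤ (-Real.log θ + Real.log 4) * ((dyadicRank v : ℝ) ^ 2 / n) := by
    have : 0 ≤ -Real.log θ + Real.log 4 := by linarith
    positivity
  have hb : 0 ≤ (if good then 0 else (-Real.log θ + n * Real.log 4)) := by
    split_ifs
    · exact le_rfl
    · nlinarith
  unfold letterWeight
  split_ifs with h hg hg
  · exact ⟨0, by simp, by simpa using hq⟩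
  · exact absurd h.1 hg
  all_goals
    refine ⟨-Real.log θ + dyadicRank v * Real.log 4, ?_, ?_⟩
    · rw [neg_add, neg_neg, Real.exp_add, Real.exp_log hθ, ← mul_neg, ← Real.log_inv,
        Real.exp_nat_mul, Real.exp_log (by norm_num)]
      norm_num
  all_goals
    rcases le_or_gt (dyadicRank v) n with hr | hr
  · exact absurd ⟨hg, hr⟩ h
  rotate_left
  · have hr' : (dyadicRank v : ℝ) ≤ n := by exact_mod_cast hr
    have : (dyadicRank v : ℝ) * Real.log 4 ≤ n * Real.log 4 := by gcongr
    linarith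
  all_goals
    have hr' : (n : ℝ) < dyadicRank v := by exact_mod_cast hr
    have h1 : (dyadicRank v : ℝ) ≤ (dyadicRank v : ℝ) ^ 2 / n := by
      rw [le_div_iff₀ (by linarith)]; nlinarith
    have h2 : -Real.log θ + dyadicRank v * Real.log 4
        ≤ (-Real.log θ + Real.log 4) * ((dyadicRank v : ℝ) ^ 2 / n) := by
      nlinarith
    have h3 : 0 ≤ -Real.log θ + n * Real.log 4 := by nlinarith
    linarith

/-- Predictability in terms of points: `f x` is determined up to `τ` by finitely many values
`f (g • x)` with `g` preceding `1`, and by `π x` up to `δ`. The functions determined in this sense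
form a uniformly closed algebra. -/
lemma exists_predictor {Γ X Y : Type*} [Group Γ]
    [MetricSpace X] [CompactSpace X] [MulAction Γ X] [MetricSpace Y] [CompactSpace Y]
    (hcX : ∀ g : Γ, Continuous fun x : X => g • x)
    (π : X → Y) (hπc : Continuous π) (R : Γ × Γ → Bool) (f : ContinuousMap X ℝ)
    (hf : f ∈ closure (Algebra.adjoin ℝ
        ({h : ContinuousMap X ℝ | ∃ g : Γ, R (g, 1) = true ∧ h = f.comp ⟨fun x => g • x, hcX g⟩}
          ∪ Set.range fun k : ContinuousMap Y ℝ => k.comp ⟨π, hπc⟩) :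
            Set (ContinuousMap X ℝ))) (τ : ℝ) (hτ : 0 < τ) :
    ∃ S : Finset Γ, (∀ g ∈ S, R (g, 1) = true) ∧ ∃ δ > 0, ∀ x x' : X,
      (∀ g ∈ S, f (g • x) = f (g • x')) → dist (π x) (π x') < δ → |f x - f x'| < τ := by
  classical
  -- the functions determined by values of `f` at predecessors of `1` and by `π`
  set Prd : ContinuousMap X ℝ → Prop := fun h => ∀ τ > 0,
    ∃ S : Finset Γ, (∀ g ∈ S, R (g, 1) = true) ∧ ∃ δ > 0, ∀ x x' : X,
      (∀ g ∈ S, f (g • x) = f (g • x')) → dist (π x) (π x') < δ → |h x - h x'| < τ with hPrd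
  have hadj : ∀ h ∈ Algebra.adjoin ℝ
        ({h : ContinuousMap X ℝ | ∃ g : Γ, R (g, 1) = true ∧ h = f.comp ⟨fun x => g • x, hcX g⟩}
          ∪ Set.range fun k : ContinuousMap Y ℝ => k.comp ⟨π, hπc⟩), Prd h := by
    intro h hh
    induction hh using Algebra.adjoin_induction with
    | mem h hh =>
      intro τ hτ
      rcases hh with ⟨g, hg, rfl⟩ | ⟨k, rfl⟩
      · refine ⟨{g}, by simpa using hg, 1, one_pos, fun x x' hx _ => ?_⟩
        have := hx g (by simp)
        simpa [this] using hτ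
      · obtain ⟨δ, hδ, hk⟩ := Metric.uniformContinuous_iff.1
          (CompactSpace.uniformContinuous_of_continuous k.continuous) τ hτ
        refine ⟨∅, by simp, δ, hδ, fun x x' _ hd => ?_⟩
        have := hk hd
        rwa [Real.dist_eq] at this
    | algebraMap r =>
      intro τ hτ
      exact ⟨∅, by simp, 1, one_pos, fun x x' _ _ => by simpa using hτ⟩
    | add h k _ _ ih ik =>
      intro τ hτ
      obtain ⟨S, hS, δ, hδ, H⟩ := ih (τ / 2) (by positivity)
      obtain ⟨S', hS', δ', hδ', H'⟩ := ik (τ / 2) (by positivity)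
      refine ⟨S ∪ S', ?_, min δ δ', lt_min hδ hδ', fun x x' hx hd => ?_⟩
      · intro g hg
        rcases Finset.mem_union.1 hg with hg | hg
        exacts [hS g hg, hS' g hg]
      · have h1 := H x x' (fun g hg => hx g (Finset.mem_union_left _ hg))
          (hd.trans_le (min_le_left _ _))
        have h2 := H' x x' (fun g hg => hx g (Finset.mem_union_right _ hg))
          (hd.trans_le (min_le_right _ _))
        rw [abs_lt] at *
        simp only [ContinuousMap.add_apply]
        constructor <;> linarith [h1.1, h1.2, h2.1, h2.2]
    | mul h k _ _ ih ik =>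
      intro τ hτ
      set M := ‖h‖ + ‖k‖ + 1 with hM
      have hMpos : 0 < M := by positivity
      obtain ⟨S, hS, δ, hδ, H⟩ := ih (τ / (2 * M)) (by positivity)
      obtain ⟨S', hS', δ', hδ', H'⟩ := ik (τ / (2 * M)) (by positivity)
      refine ⟨S ∪ S', ?_, min δ δ', lt_min hδ hδ', fun x x' hx hd => ?_⟩
      · intro g hg
        rcases Finset.mem_union.1 hg with hg | hg
        exacts [hS g hg, hS' g hg]
      · have h1 := H x x' (fun g hg => hx g (Finset.mem_union_left _ hg))
          (hd.trans_le (min_le_left _ _))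
        have h2 := H' x x' (fun g hg => hx g (Finset.mem_union_right _ hg))
          (hd.trans_le (min_le_right _ _))
        have b1 : |h x| ≤ M := (h.norm_coe_le_norm x).trans
          (by rw [hM]; linarith [norm_nonneg k])
        have b2 : |k x'| ≤ M := (k.norm_coe_le_norm x').trans
          (by rw [hM]; linarith [norm_nonneg h])
        have e : (h * k) x - (h * k) x' = h x * (k x - k x') + k x' * (h x - h x') := by
          simp only [ContinuousMap.mul_apply]; ring
        rw [e]
        calc _ ≤ |h x| * |k x - k x'| + |k x'| * |h x - h x'| := by
              rw [← abs_mul, ← abs_mul]; exact abs_add_le _ _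
          _ ≤ M * |k x - k x'| + M * |h x - h x'| := by gcongr
          _ < M * (τ / (2 * M)) + M * (τ / (2 * M)) := by gcongr
          _ = τ := by field_simp; norm_num
  obtain ⟨p, hp, hfp⟩ := Metric.mem_closure_iff.1 hf (τ / 3) (by positivity)
  obtain ⟨S, hS, δ, hδ, H⟩ := hadj p hp (τ / 3) (by positivity)
  refine ⟨S, hS, δ, hδ, fun x x' hx hd => ?_⟩
  have h1 := H x x' hx hd
  have h2 := (ContinuousMap.dist_apply_le_dist (f := f) (g := p) x).trans_lt hfp
  have h3 := (ContinuousMap.dist_apply_le_dist (f := f) (g := p) x').trans_lt hfp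
  rw [Real.dist_eq] at h2 h3
  rw [abs_lt] at *
  constructor <;> linarith [h1.1, h1.2, h2.1, h2.2, h3.1, h3.2]

/-! ### Counting separated points with a predicting order -/

/-- The relation `R` predicts every `φ j`, `j ∈ J`, up to `τ` from its exact values at those `k` in
the window `K` that precede `1`, and from `π` up to `δ`. For fixed parameters this depends on
finitely many coordinates of `R`. -/
def IsPredicting {Γ X Y ι : Type*} [Group Γ] [MulAction Γ X] [MetricSpace Y] (π : X → Y)
    (φ : ι → X → ℝ) (J : Finset ι) (τ : ℝ) (K : Finset Γ) (δ : ℝ) (R : Γ × Γ → Bool) : Prop :=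
  ∀ j ∈ J, ∀ x x' : X, (∀ k ∈ K, R (k, 1) = true → φ j (k • x) = φ j (k • x')) →
    dist (π x) (π x') < δ → |φ j x - φ j x'| < τ

open Classical in
/-- The counting estimate for a finite set `E` of points separated by their letters over `F`, with `B`
a set containing all positions where the translated order fails to predict or the window leaves
`F`. Within one element of a minimal subcover of `coverJoin F V`, positions are revealed along `R`. -/
lemma log_card_le {Γ X Y ι : Type*} [Group Γ] [MulAction Γ X]
    [MetricSpace Y] [CompactSpace Y] [MulAction Γ Y]
    (hcY : ∀ g : Γ, Continuous fun y : Y => g • y)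
    (π : X → Y) (hπeq : ∀ (g : Γ) (x : X), π (g • x) = g • π x)
    (φ : ι → X → ℝ) (hφ : ∀ j x, 0 ≤ φ j x ∧ φ j x ≤ 1) (J : Finset ι) (F : Finset Γ)
    (E : Finset X) (hE : E.Nonempty) (R : Γ × Γ → Bool) (hR : R ∈ ordSet Γ) {n : ℕ} (hn : 1 ≤ n)
    {θ : ℝ} (hθ : 0 < θ) (hθ1 : θ ≤ 1) (K : Finset Γ) (δ : ℝ) (V : Set (Set Y))
    (hV : IsOpenCover V) (hVδ : ∀ v ∈ V, ∀ y ∈ v, ∀ y' ∈ v, dist y y' < δ)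
    (hsep : ∀ x ∈ E, ∀ x' ∈ E, (∀ g ∈ F, ∀ j ∈ J, φ j (g • x) = φ j (g • x')) → x = x')
    (hlev : ∀ x ∈ E, ∀ g ∈ F, ∀ j ∈ J, ∃ r, IsLevel r (φ j (g • x)))
    (B : Finset Γ) (hBF : B ⊆ F)
    (hB : ∀ g ∈ F, g ∉ B → IsPredicting π φ J ((1 / 2) ^ n) K δ (relAct g R) ∧
      ∀ k ∈ K, k * g ∈ F)
    (M : ℝ) (hM : ∑ x ∈ E, ∑ p ∈ F ×ˢ J, (dyadicRank (φ p.2 (p.1 • x)) : ℝ) ^ 2 ≤ M * E.card) :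
    Real.log E.card ≤ Real.log (coverNum (coverJoin F V)) + F.card * J.card * (4 * θ)
      + (B.card * J.card * (-Real.log θ + n * Real.log 4)
        + (-Real.log θ + Real.log 4) / n * M) := by
  obtain ⟨W, hW, hWc, hWcard⟩ := exists_subcover (isOpenCover_coverJoin hcY F hV)
  have hl : ∀ x : X, ∃ w ∈ W, π x ∈ w := fun x => by
    obtain ⟨w, hw, hx⟩ := Set.mem_sUnion.1 (hWc ▸ Set.mem_univ (π x))
    exact ⟨w, Finset.mem_coe.1 hw, hx⟩
  choose l hlW hl using hl
  set wt : Γ × ι → ℝ → ℝ := fun p v => letterWeight θ n (p.1 ∉ B) v with hwt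
  have hnum : (∑ x ∈ E, ∏ p ∈ F ×ˢ J, wt p (φ p.2 (p.1 • x)))
      ≤ W.card * (1 + 4 * θ) ^ (F.card * J.card) := by
    rw [← Finset.sum_fiberwise_of_maps_to (fun x _ => hlW x : ∀ x ∈ E, l x ∈ W), ← nsmul_eq_mul]
    refine Finset.sum_le_card_nsmul _ _ _ fun w hw => ?_
    rw [← Finset.card_product]
    refine weighted_count (fun p q => R (p.1, q.1) = true)
      (fun a b c => hR.2 a.1 b.1 c.1) ?_ (F ×ˢ J) _ (fun x p => φ p.2 (p.1 • x)) wt _ ?_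
      (by positivity) ?_ ?_
    · intro p hp
      have := hR.1 _ _ hp
      rw [hp] at this
      exact absurd this (by simp)
    · intro p v
      simp only [hwt, letterWeight]
      split_ifs <;> positivity
    · intro x hx x' hx' h
      refine hsep x (Finset.mem_filter.1 hx).1 x' (Finset.mem_filter.1 hx').1 fun g hg j hj => ?_
      exact h (g, j) (Finset.mk_mem_product hg hj)
    · rintro ⟨g, j⟩ hp T hT hTT
      obtain ⟨hg, hj⟩ := Finset.mem_product.1 hp
      have hT' : ∀ u ∈ T, (0 ≤ u ∧ u ≤ 1) ∧ ∃ r, IsLevel r u := by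
        intro u hu
        obtain ⟨x, hx, rfl⟩ := hT u hu
        exact ⟨hφ _ _, hlev x (Finset.mem_filter.1 hx).1 g hg j hj⟩
      refine sum_letterWeight_le hθ n _ T hT' ?_
      intro hgB u hu v hv hru hrv
      refine IsLevel.eq_of_abs_lt ((isLevel_dyadicRank (hT' u hu).2).mono hru)
        ((isLevel_dyadicRank (hT' v hv).2).mono hrv) ?_
      obtain ⟨x, hx, x', hx', rfl, rfl, hag⟩ := hTT u hu v hv
      rw [Finset.mem_filter] at hx hx'
      obtain ⟨hpred, hKF⟩ := hB g hg hgB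
      refine hpred j hj (g • x) (g • x') ?_ ?_
      · intro k hk hRk
        rw [← mul_smul, ← mul_smul]
        refine hag (k * g, j) (Finset.mk_mem_product (hKF k hk) hj) ?_
        simpa [relAct] using hRk
      · obtain ⟨u, hu, hwu⟩ := hW hw
        have h1 : π x ∈ w := hx.2 ▸ hl x
        have h2 : π x' ∈ w := hx'.2 ▸ hl x'
        rw [hwu] at h1 h2
        rw [hπeq, hπeq]
        exact hVδ _ (hu g hg) _ (Set.mem_iInter₂.1 h1 g hg) _ (Set.mem_iInter₂.1 h2 g hg)
  choose c hc hcle using fun (p : Γ × ι) (v : ℝ) =>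
    letterWeight_eq_exp hθ hθ1 hn (p.1 ∉ B) v
  set D := -Real.log θ + n * Real.log 4 with hD
  set A := B.card * J.card * D + (-Real.log θ + Real.log 4) / n * M with hA
  have hab : 0 ≤ (-Real.log θ + Real.log 4) / n := by
    have h1 := Real.log_nonpos hθ.le hθ1
    have h2 : 0 ≤ Real.log 4 := Real.log_nonneg (by norm_num)
    exact div_nonneg (by linarith) (Nat.cast_nonneg _)
  have hsum : ∑ x ∈ E, ∑ p ∈ F ×ˢ J, c p (φ p.2 (p.1 • x)) ≤ A * E.card := by
    calc _ ≤ ∑ x ∈ E, ∑ p ∈ F ×ˢ J, ((if p.1 ∉ B then 0 else D) +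
          (-Real.log θ + Real.log 4) / n * (dyadicRank (φ p.2 (p.1 • x)) : ℝ) ^ 2) := by
          refine Finset.sum_le_sum fun x _ => Finset.sum_le_sum fun p _ => ?_
          rw [div_mul_eq_mul_div, mul_div_assoc]
          exact hcle p _
      _ = E.card * (B.card * J.card * D) + (-Real.log θ + Real.log 4) / n *
          ∑ x ∈ E, ∑ p ∈ F ×ˢ J, (dyadicRank (φ p.2 (p.1 • x)) : ℝ) ^ 2 := by
          simp only [Finset.sum_add_distrib, Finset.mul_sum]
          congr 1
          rw [Finset.sum_const, nsmul_eq_mul]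
          congr 1
          rw [Finset.sum_product_right]
          simp only [ite_not, Finset.sum_ite_mem]
          rw [Finset.sum_const, Finset.sum_const,
            Finset.inter_eq_right.2 hBF, nsmul_eq_mul, nsmul_eq_mul]
          ring
      _ ≤ A * E.card := by
          have := mul_le_mul_of_nonneg_left hM hab
          rw [hA]; linarith
  have hJ := card_mul_exp_le E (fun x => ∑ p ∈ F ×ˢ J, c p (φ p.2 (p.1 • x))) A hsum
  have he : ∀ x ∈ E, Real.exp (-∑ p ∈ F ×ˢ J, c p (φ p.2 (p.1 • x)))
      = ∏ p ∈ F ×ˢ J, wt p (φ p.2 (p.1 • x)) := by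
    intro x _
    rw [← Finset.sum_neg_distrib, Real.exp_sum]
    exact Finset.prod_congr rfl fun p _ => (hc p _).symm
  rw [Finset.sum_congr rfl he] at hJ
  have hfin := hJ.trans hnum
  have hEpos : (0 : ℝ) < E.card := by exact_mod_cast hE.card_pos
  have hWpos : (0 : ℝ) < W.card := by
    obtain ⟨x, _⟩ := hE
    exact_mod_cast Finset.card_pos.2 ⟨l x, hlW x⟩
  have hlog := Real.log_le_log (by positivity) hfin
  rw [Real.log_mul hEpos.ne' (Real.exp_pos _).ne', Real.log_exp, Real.log_mul hWpos.ne'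
    (by positivity), Real.log_pow] at hlog
  have h4 : Real.log (1 + 4 * θ) ≤ 4 * θ := by
    have := Real.log_le_sub_one_of_pos (show 0 < 1 + 4 * θ by positivity)
    linarith
  have h5 : ((F.card * J.card : ℕ) : ℝ) * Real.log (1 + 4 * θ) ≤ F.card * J.card * (4 * θ) := by
    push_cast
    gcongr
  rw [← hWcard]
  linarith

/-! ### Windows, good orders and the choice of the shift -/

lemma measurableSet_isPredicting {Γ X Y ι : Type*} [Group Γ] [MulAction Γ X] [MetricSpace Y]
    (π : X → Y) (φ : ι → X → ℝ) (J : Finset ι) (τ : ℝ) (K : Finset Γ) (δ : ℝ) :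
    MeasurableSet {R : Γ × Γ → Bool | IsPredicting π φ J τ K δ R} := by
  have e : {R : Γ × Γ → Bool | IsPredicting π φ J τ K δ R} =
      (fun (R : Γ × Γ → Bool) (k : K) => R (k, 1)) ⁻¹'
        {r : K → Bool | ∀ j ∈ J, ∀ x x' : X,
          (∀ k : K, r k = true → φ j ((k : Γ) • x) = φ j ((k : Γ) • x')) →
          dist (π x) (π x') < δ → |φ j x - φ j x'| < τ} := by
    ext R
    simp [IsPredicting]
  rw [e]
  refine (measurable_pi_iff.2 fun k => measurable_pi_apply _) ?_
  exact Set.Finite.measurableSet (Set.toFinite _)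

/-- If almost every order predicts with some finite window and some `δ`, then a single window and a
single `δ` work for all orders outside a set of measure less than `η`. -/
lemma exists_window {Γ X Y ι : Type*} [Group Γ] [Countable Γ] [MulAction Γ X] [MetricSpace Y]
    (π : X → Y) (φ : ι → X → ℝ) (J : Finset ι) (τ : ℝ)
    (ν : Measure (Γ × Γ → Bool)) [IsProbabilityMeasure ν]
    (h : ∀ j ∈ J, ∀ᵐ R ∂ν, ∃ S : Finset Γ, (∀ g ∈ S, R (g, 1) = true) ∧ ∃ δ > 0, ∀ x x' : X,
      (∀ g ∈ S, φ j (g • x) = φ j (g • x')) → dist (π x) (π x') < δ → |φ j x - φ j x'| < τ)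
    (η : ℝ) (hη : 0 < η) :
    ∃ K : Finset Γ, ∃ δ > 0,
      ν {R | IsPredicting π φ J τ K δ R}ᶜ < ENNReal.ofReal η := by
  classical
  obtain ⟨e, he⟩ := exists_surjective_nat Γ
  set K : ℕ → Finset Γ := fun t => (Finset.range t).image e with hK
  set A : ℕ → Set (Γ × Γ → Bool) :=
    fun t => {R | IsPredicting π φ J τ (K t) (1 / ((t : ℝ) + 1)) R} with hA
  have hKmono : Monotone K := fun s t hst => Finset.image_subset_image (by simpa using hst)
  have hAmono : Monotone A := by
    intro s t hst R hR j hj x x' hx hd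
    refine hR j hj x x' (fun k hk => hx k (hKmono hst hk)) (hd.trans_le ?_)
    have : (s : ℝ) ≤ t := by exact_mod_cast hst
    gcongr
  have hanti : Antitone fun t => (A t)ᶜ := fun s t hst => Set.compl_subset_compl.2 (hAmono hst)
  have hlim := tendsto_measure_iInter_atTop (μ := ν) (s := fun t => (A t)ᶜ)
    (fun t => (measurableSet_isPredicting π φ J τ _ _).compl.nullMeasurableSet) hanti
    ⟨0, measure_ne_top _ _⟩
  have hzero : ν (⋂ t, (A t)ᶜ) = 0 := by
    have hall : ∀ᵐ R ∂ν, ∀ j ∈ J, ∃ S : Finset Γ, (∀ g ∈ S, R (g, 1) = true) ∧ ∃ δ > 0,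
        ∀ x x' : X, (∀ g ∈ S, φ j (g • x) = φ j (g • x')) → dist (π x) (π x') < δ →
          |φ j x - φ j x'| < τ := (Finset.eventually_all J).2 h
    refine measure_mono_null ?_ hall
    intro R hR hgood
    have hR : ∀ t, R ∉ A t := fun t => Set.mem_iInter.1 hR t
    have hS : ∀ j ∈ J, ∃ t : ℕ, ∀ t' ≥ t, ∀ x x' : X,
        (∀ k ∈ K t', R (k, 1) = true → φ j (k • x) = φ j (k • x')) →
        dist (π x) (π x') < 1 / ((t' : ℝ) + 1) → |φ j x - φ j x'| < τ := by
      intro j hj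
      obtain ⟨S, hS, δ, hδ, H⟩ := hgood j hj
      choose i hi using he
      obtain ⟨t₀, ht₀⟩ := exists_nat_one_div_lt hδ
      refine ⟨max (S.sup i + 1) t₀, fun t' ht' x x' hx hd => H x x' ?_ (hd.trans ?_)⟩
      · intro g hg
        refine hx g (Finset.mem_image.2 ⟨i g, Finset.mem_range.2 ?_, hi g⟩) (hS g hg)
        have := Finset.le_sup (f := i) hg
        have := le_of_max_le_left ht'
        omega
      · refine lt_of_le_of_lt ?_ ht₀
        have : (t₀ : ℝ) ≤ t' := by exact_mod_cast le_of_max_le_right ht'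
        gcongr
    choose! t ht using hS
    exact hR (J.sup t) fun j hj => ht j hj _ (Finset.le_sup hj)
  rw [hzero] at hlim
  obtain ⟨t, ht⟩ := (hlim.eventually (gt_mem_nhds (ENNReal.ofReal_pos.2 hη))).exists
  exact ⟨K t, 1 / ((t : ℝ) + 1), by positivity, ht⟩

lemma measurableSet_ordSet (Γ : Type*) [Group Γ] [Countable Γ] : MeasurableSet (ordSet Γ) := by
  have e : ordSet Γ = (⋂ (x : Γ) (y : Γ), {R | R (x, y) = true → R (y, x) = false}) ∩
      ⋂ (x : Γ) (y : Γ) (z : Γ), {R | R (x, y) = true → R (y, z) = true → R (x, z) = true} := by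
    ext R
    simp [ordSet]
  have hm : ∀ (p : Γ × Γ) (b : Bool), MeasurableSet {R : Γ × Γ → Bool | R p = b} := fun p b =>
    measurableSet_eq_fun (measurable_pi_apply p) measurable_const
  rw [e]
  refine MeasurableSet.inter (.iInter fun x => .iInter fun y => ?_)
    (.iInter fun x => .iInter fun y => .iInter fun z => ?_)
  · exact (hm _ _).imp (hm _ _)
  · exact (hm _ _).imp ((hm _ _).imp (hm _ _))

open Classical in
/-- By invariance of `ν` the expected number of `g ∈ F` whose translate of the random order lies
outside `A` is `|F| * ν Aᶜ`, so some order does no worse. -/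
lemma exists_order_few_bad {Γ : Type*} [Group Γ] [Countable Γ] (ν : Measure (Γ × Γ → Bool))
    (hν : IsInvRandomOrder ν) {A : Set (Γ × Γ → Bool)} (hA : MeasurableSet A) {η : ℝ}
    (hη : 0 ≤ η) (hAη : ν Aᶜ ≤ ENNReal.ofReal η) (F : Finset Γ) :
    ∃ R ∈ ordSet Γ, ((F.filter fun g => relAct g R ∉ A).card : ℝ) ≤ η * F.card := by
  obtain ⟨hprob, hord, hinv⟩ := hν
  have hmeas : ∀ g : Γ, Measurable (relAct g) := fun g =>
    measurable_pi_iff.2 fun p => measurable_pi_apply _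
  have hcount : ∀ R, ((F.filter fun g => relAct g R ∉ A).card : ℝ≥0∞)
      = ∑ g ∈ F, (relAct g ⁻¹' Aᶜ).indicator 1 R := by
    intro R
    rw [Finset.card_filter]
    push_cast
    refine Finset.sum_congr rfl fun g _ => ?_
    by_cases h : relAct g R ∈ A <;> simp [h]
  have hm : Measurable fun R => ((F.filter fun g => relAct g R ∉ A).card : ℝ≥0∞) := by
    simp only [hcount]
    exact Finset.measurable_sum _ fun g _ => measurable_one.indicator (hmeas g hA.compl)
  have hintegral : ∫⁻ R, ((F.filter fun g => relAct g R ∉ A).card : ℝ≥0∞) ∂ν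
      ≤ F.card * ENNReal.ofReal η := by
    simp only [hcount]
    rw [lintegral_finsetSum _ fun g _ => measurable_one.indicator (hmeas g hA.compl)]
    calc _ = ∑ g ∈ F, ν Aᶜ := by
          refine Finset.sum_congr rfl fun g _ => ?_
          rw [lintegral_indicator_one (hmeas g hA.compl), ← Measure.map_apply (hmeas g) hA.compl,
            hinv g]
      _ ≤ _ := by
          rw [Finset.sum_const, nsmul_eq_mul]; gcongr
  have hnull : ν (ordSet Γ)ᶜ = 0 := (prob_compl_eq_zero_iff (measurableSet_ordSet Γ)).2 hord
  obtain ⟨R, hR, hle⟩ := exists_notMem_null_le_lintegral hm.aemeasurable hnull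
  refine ⟨R, by simpa using hR, ?_⟩
  have h := hle.trans hintegral
  rw [← ENNReal.ofReal_natCast, ← ENNReal.ofReal_natCast, ← ENNReal.ofReal_mul (by positivity),
    ENNReal.ofReal_le_ofReal_iff (by positivity)] at h
  linarith

open Classical in
lemma folner_boundary {Γ : Type*} [Group Γ] {F : ℕ → Finset Γ} (hF : IsFolner F)
    (K : Finset Γ) {η : ℝ} (hη : 0 < η) :
    ∀ᶠ i in atTop, (((F i).filter fun g => ∃ k ∈ K, k * g ∉ F i).card : ℝ) ≤ η * (F i).card := by
  have hlim : Tendsto (fun i => ∑ k ∈ K, ((((fun h => k * h) '' ↑(F i) \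
      (↑(F i) : Set Γ)).ncard : ℝ) / (F i).card)) atTop (nhds 0) := by
    simpa using tendsto_finsetSum K fun k _ => hF.2 k
  filter_upwards [hlim.eventually (gt_mem_nhds hη)] with i hi
  have hpos : (0 : ℝ) < (F i).card := by exact_mod_cast (hF.1 i).card_pos
  rw [← Finset.sum_div, div_lt_iff₀ hpos] at hi
  refine le_trans ?_ hi.le
  have h1 : (F i).filter (fun g => ∃ k ∈ K, k * g ∉ F i)
      ⊆ K.biUnion fun k => (F i).filter fun g => k * g ∉ F i := by
    intro g hg
    obtain ⟨hg, k, hk, h⟩ := Finset.mem_filter.1 hg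
    exact Finset.mem_biUnion.2 ⟨k, hk, Finset.mem_filter.2 ⟨hg, h⟩⟩
  have h2 : ((F i).filter (fun g => ∃ k ∈ K, k * g ∉ F i)).card
      ≤ ∑ k ∈ K, ((fun h => k * h) '' ↑(F i) \ (↑(F i) : Set Γ)).ncard := by
    refine (Finset.card_le_card h1).trans (Finset.card_biUnion_le.trans ?_)
    refine Finset.sum_le_sum fun k _ => ?_
    rw [← Set.ncard_coe_finset]
    refine Set.ncard_le_ncard_of_injOn (fun h => k * h) ?_ (fun a _ b _ h => mul_left_cancel h)
      (((F i).finite_toSet.image _).subset Set.sdiff_subset)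
    intro g hg
    obtain ⟨hg, h⟩ := Finset.mem_filter.1 (Finset.mem_coe.1 hg)
    exact ⟨⟨g, hg, rfl⟩, h⟩
  exact_mod_cast h2

/-- The average over `s` of the mean dyadic cost of the letters `C (f j (g • x) - s)` is bounded
independently of `i`, so by Fatou's lemma its lower limit is finite for some `s ∈ [0, 1]`. -/
lemma exists_shift {Γ X ι : Type*} [Group Γ] [MulAction Γ X] {C : ℝ → ℝ} (hC : Continuous C)
    (hI : ∫⁻ v, dyadicCost (C v) < ⊤) (f : ι → X → ℝ) (J : Finset ι) (F : ℕ → Finset Γ)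
    (hF : ∀ i, (F i).Nonempty) (E : ℕ → Finset X) :
    ∃ s : ℝ, 0 ≤ s ∧ s ≤ 1 ∧ ∃ M : NNReal, ∃ᶠ i in atTop,
      ∑ x ∈ E i, ∑ p ∈ F i ×ˢ J, dyadicCost (C (f p.2 (p.1 • x) - s))
        ≤ M * ((E i).card * (F i).card) := by
  set I := ∫⁻ v, dyadicCost (C v) with hIdef
  have hmC := measurable_dyadicCost_comp hC
  set b : ℕ → ℝ → ℝ≥0∞ := fun i s =>
    (∑ x ∈ E i, ∑ p ∈ F i ×ˢ J, dyadicCost (C (f p.2 (p.1 • x) - s)))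
      / ((E i).card * (F i).card) with hb
  have hterm : ∀ t : ℝ, Measurable fun s => dyadicCost (C (t - s)) := fun t =>
    hmC.comp (measurable_const.sub measurable_id)
  have hbm0 : ∀ i, Measurable fun s =>
      ∑ x ∈ E i, ∑ p ∈ F i ×ˢ J, dyadicCost (C (f p.2 (p.1 • x) - s)) := fun i =>
    Finset.measurable_sum _ fun x _ => Finset.measurable_sum _ fun p _ => hterm _
  have hbm : ∀ i, Measurable (b i) := fun i => (hbm0 i).div_const _
  have hbi : ∀ i, ∫⁻ s in Set.Icc (0 : ℝ) 1, b i s ≤ J.card * I := by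
    intro i
    refine (setLIntegral_le_lintegral _ _).trans ?_
    simp only [hb, div_eq_mul_inv]
    rw [lintegral_mul_const _ (hbm0 i), lintegral_finsetSum _ fun x _ =>
      Finset.measurable_sum _ fun p _ => hterm _]
    have h1 : ∀ x ∈ E i, ∫⁻ s, ∑ p ∈ F i ×ˢ J, dyadicCost (C (f p.2 (p.1 • x) - s))
        = (F i).card * J.card * I := by
      intro x _
      rw [lintegral_finsetSum _ fun p _ => hterm _]
      simp only [lintegral_sub_left_eq_self (fun v => dyadicCost (C v))]
      rw [Finset.sum_const, Finset.card_product, nsmul_eq_mul]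
      push_cast
      rfl
    rw [Finset.sum_congr rfl h1, Finset.sum_const, nsmul_eq_mul, ← div_eq_mul_inv]
    refine ENNReal.div_le_of_le_mul (le_of_eq ?_)
    ring
  have hfatou : ∫⁻ s in Set.Icc (0 : ℝ) 1, liminf (fun i => b i s) atTop < ⊤ := by
    refine (lintegral_liminf_le hbm).trans_lt (lt_of_le_of_lt ?_
      (ENNReal.mul_lt_top (ENNReal.natCast_lt_top J.card) hI))
    exact liminf_le_of_frequently_le' (Frequently.of_forall hbi)
  have hae := ae_lt_top (Measurable.liminf hbm) hfatou.ne
  have : NeBot (ae (volume.restrict (Set.Icc (0 : ℝ) 1))) := by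
    rw [ae_neBot]
    intro h
    have := congrArg (fun m => m Set.univ) h
    simp at this
  obtain ⟨s, hs, hs01⟩ := (hae.and (ae_restrict_mem measurableSet_Icc)).exists
  obtain ⟨M, hM, -⟩ := ENNReal.lt_iff_exists_nnreal_btwn.1 hs
  refine ⟨s, hs01.1, hs01.2, M, (frequently_lt_of_liminf_lt (by isBoundedDefault) hM).mono ?_⟩
  intro i hi
  rcases (E i).eq_empty_or_nonempty with h0 | h0
  · simp [h0]
  · have hcE : ((E i).card : ℝ≥0∞) ≠ 0 := by exact_mod_cast h0.card_pos.ne'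
    have hcF : ((F i).card : ℝ≥0∞) ≠ 0 := by exact_mod_cast (hF i).card_pos.ne'
    have hfin : ((E i).card * (F i).card : ℝ≥0∞) ≠ ⊤ := by finiteness
    exact (ENNReal.div_le_iff (mul_ne_zero hcE hcF) hfin).1 hi.le

/-! ### Comparison of the entropies -/

/-- Every open cover `U` of `X` is dominated, for infinitely many `i` and up to `ε`, by an open cover
of `Y`. The cover of `Y` depends on `F`, since the shift of the Cantor function does. -/
lemma exists_cover_frequently {Γ X Y : Type*} [Group Γ] [Countable Γ]
    [MetricSpace X] [CompactSpace X] [MulAction Γ X]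
    [MetricSpace Y] [CompactSpace Y] [MulAction Γ Y]
    (hcX : ∀ g : Γ, Continuous fun x : X => g • x)
    (hcY : ∀ g : Γ, Continuous fun y : Y => g • y)
    (π : X → Y) (hπc : Continuous π)
    (hπeq : ∀ (g : Γ) (x : X), π (g • x) = g • π x)
    (ν : Measure (Γ × Γ → Bool)) (hν : IsInvRandomOrder ν)
    (hpred : ∀ f : ContinuousMap X ℝ, ∀ᵐ R ∂ν,
      f ∈ closure (Algebra.adjoin ℝ
        ({h : ContinuousMap X ℝ | ∃ g : Γ, R (g, 1) = true ∧ h = f.comp ⟨fun x => g • x, hcX g⟩}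
          ∪ Set.range fun k : ContinuousMap Y ℝ => k.comp ⟨π, hπc⟩) :
            Set (ContinuousMap X ℝ)))
    (F : ℕ → Finset Γ) (hF : IsFolner F) (U : Set (Set X)) (hU : IsOpenCover U)
    (ε : ℝ) (hε : 0 < ε) :
    ∃ V : Set (Set Y), IsOpenCover V ∧ ∃ᶠ i in atTop,
      Real.log (coverNum (coverJoin (F i) U))
        ≤ Real.log (coverNum (coverJoin (F i) V)) + ε * (F i).card := by
  classical
  obtain ⟨C, hC, hC0, hC1, hCs, hC01⟩ := exists_cantor
  obtain ⟨lam, hlam, hleb⟩ := lebesgue_number_lemma_of_metric_sUnion isCompact_univ hU.1 hU.2.ge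
  obtain ⟨J', -, hJ'fin, hJ'⟩ :=
    (isCompact_univ (X := X)).finite_cover_balls (show 0 < lam / 4 by positivity)
  obtain ⟨J, rfl⟩ := hJ'fin.exists_finset_coe
  choose E hEc hEsep using fun i =>
    exists_separated hcX hlam (fun x => hleb x (Set.mem_univ x)) (F i)
  -- `f j ≤ 0` within distance `lam / 4` of `j`, and `f j ≥ 2` from distance `lam / 2` on
  set f : X → X → ℝ := fun j x => (dist x j - lam / 4) * (8 / lam) with hf
  -- shifting by `s ∈ [0, 1]` keeps `f j - s` nonpositive near `j` and at least `1` far from `j`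
  obtain ⟨s, hs0, hs1, M, hfreq⟩ := exists_shift hC
    (lintegral_dyadicCost_lt_top hC hC0 hC1 hCs) f J F hF.1 E
  set φ : X → X → ℝ := fun j x => C (f j x - s) with hφ
  have hφc : ∀ j, Continuous (φ j) := fun j => by
    simp only [hφ, hf]; fun_prop
  have hsep : ∀ i, ∀ x ∈ E i, ∀ x' ∈ E i,
      (∀ g ∈ F i, ∀ j ∈ J, φ j (g • x) = φ j (g • x')) → x = x' := by
    intro i x hx x' hx' h
    by_contra hne
    obtain ⟨g, hg, hd⟩ := hEsep i x hx x' hx' hne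
    obtain ⟨j, hj, hxj⟩ := Set.mem_iUnion₂.1 (hJ' (Set.mem_univ (g • x)))
    rw [Metric.mem_ball] at hxj
    have h8 : 0 < 8 / lam := by positivity
    have h1 : φ j (g • x) = 0 := by
      refine hC0 _ ?_
      have : f j (g • x) ≤ 0 := by simp only [hf]; nlinarith
      linarith
    have h2 : f j (g • x') < 2 := by
      by_contra! h2
      have h3 : φ j (g • x') = 1 := hC1 _ (by linarith)
      rw [← h g hg j hj, h1] at h3
      norm_num at h3
    have h3 : dist (g • x') j < lam / 2 := by
      simp only [hf] at h2
      rw [← mul_div_assoc, div_lt_iff₀ hlam] at h2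
      linarith
    have := dist_triangle_right (g • x) (g • x') j
    linarith
  -- `θ` controls the local sums `1 + 4 * θ`, then `n` the cost of letters of high rank, and
  -- finally `η` the proportion of bad positions, each of which costs at most `D` extra
  obtain ⟨m, hm⟩ : ∃ m : ℝ, m = J.card := ⟨_, rfl⟩
  have hm0 : 0 ≤ m := hm ▸ Nat.cast_nonneg _
  obtain ⟨θ, hθ, hθ1, hθε⟩ : ∃ θ : ℝ, 0 < θ ∧ θ ≤ 1 ∧ m * (4 * θ) ≤ ε / 4 := by
    refine ⟨min 1 (ε / (16 * (m + 1))), by positivity, min_le_left _ _, ?_⟩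
    calc m * (4 * min 1 (ε / (16 * (m + 1)))) ≤ (m + 1) * (4 * (ε / (16 * (m + 1)))) := by
          gcongr
          · linarith
          · exact min_le_right _ _
      _ = ε / 4 := by field_simp; norm_num
  have hlθ : 0 ≤ -Real.log θ := by linarith [Real.log_nonpos hθ.le hθ1]
  have hl4 : 0 < Real.log 4 := Real.log_pos (by norm_num)
  obtain ⟨n, hn, hnε⟩ : ∃ n : ℕ, 1 ≤ n ∧
      (-Real.log θ + Real.log 4) / n * (2 * M) ≤ ε / 4 := by
    obtain ⟨N, hN⟩ := exists_nat_gt (8 * M * (-Real.log θ + Real.log 4) / ε)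
    refine ⟨N + 1, by omega, ?_⟩
    rw [div_lt_iff₀ hε] at hN
    rw [div_mul_eq_mul_div, div_le_iff₀ (by positivity)]
    push_cast
    linarith
  set D := -Real.log θ + n * Real.log 4 with hD
  have hD0 : 0 ≤ D := by positivity
  set η := ε / (4 * (m * D + 1)) with hη
  have hη0 : 0 < η := by positivity
  have hηε : 2 * η * m * D ≤ ε / 2 := by
    have : 2 * η * (m * D + 1) = ε / 2 := by rw [hη]; field_simp; norm_num
    nlinarith
  have hprob : IsProbabilityMeasure ν := hν.1
  obtain ⟨K, δ, hδ, hKδ⟩ := exists_window π φ J ((1 / 2) ^ n) ν (fun j _ => by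
    filter_upwards [hpred ⟨φ j, hφc j⟩] with R hR
    exact exists_predictor hcX π hπc R ⟨φ j, hφc j⟩ hR _ (by positivity)) η hη0
  have hVcov : IsOpenCover {b : Set Y | ∃ y, b = Metric.ball y (δ / 2)} := by
    refine ⟨?_, ?_⟩
    · rintro _ ⟨y, rfl⟩; exact Metric.isOpen_ball
    · exact Set.eq_univ_of_forall fun y => Set.mem_sUnion.2
        ⟨_, ⟨y, rfl⟩, Metric.mem_ball_self (by positivity)⟩
  refine ⟨_, hVcov, (hfreq.and_eventually (folner_boundary hF K hη0)).mono ?_⟩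
  rintro i ⟨hcost, hbd⟩
  -- `E i` is empty only if `X` is, and then `Real.log 0 = 0`
  rcases (E i).eq_empty_or_nonempty with h0 | h0
  · have : coverNum (coverJoin (F i) U) = 0 := by simpa [h0] using hEc i
    rw [this, Nat.cast_zero, Real.log_zero]
    have := Real.log_natCast_nonneg
      (coverNum (coverJoin (F i) {b : Set Y | ∃ y, b = Metric.ball y (δ / 2)}))
    exact add_nonneg this (mul_nonneg hε.le (Nat.cast_nonneg _))
  obtain ⟨R, hR, hRbad⟩ := exists_order_few_bad ν hν
    (measurableSet_isPredicting π φ J ((1 / 2) ^ n) K δ) hη0.le hKδ.le (F i)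
  set B := ((F i).filter fun g => relAct g R ∉ {R | IsPredicting π φ J ((1 / 2) ^ n) K δ R}) ∪
    (F i).filter fun g => ∃ k ∈ K, k * g ∉ F i with hB
  have hBcard : (B.card : ℝ) ≤ 2 * η * (F i).card := by
    have : (B.card : ℝ) ≤ _ := Nat.cast_le.2 (Finset.card_union_le _ _)
    push_cast at this
    linarith
  have hrank : ∑ x ∈ E i, ∑ p ∈ F i ×ˢ J, (dyadicRank (φ p.2 (p.1 • x)) : ℝ) ^ 2
      ≤ (2 * M * (F i).card) * (E i).card := by
    have h1 : ∑ x ∈ E i, ∑ p ∈ F i ×ˢ J, (dyadicRank (φ p.2 (p.1 • x)) : ℝ≥0∞) ^ 2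
        ≤ 2 * (M * ((E i).card * (F i).card)) := by
      refine le_trans ?_ (mul_le_mul_right hcost 2)
      simp only [Finset.mul_sum]
      exact Finset.sum_le_sum fun x _ => Finset.sum_le_sum fun p _ => dyadicRank_sq_le _
    have h2 : ∑ x ∈ E i, ∑ p ∈ F i ×ˢ J, (dyadicRank (φ p.2 (p.1 • x)) : NNReal) ^ 2
        ≤ 2 * (M * ((E i).card * (F i).card)) := by exact_mod_cast h1
    have h3 : ∑ x ∈ E i, ∑ p ∈ F i ×ˢ J, (dyadicRank (φ p.2 (p.1 • x)) : ℝ) ^ 2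
        ≤ 2 * (M * ((E i).card * (F i).card)) := by exact_mod_cast h2
    linarith
  have hlev : ∀ x ∈ E i, ∀ g ∈ F i, ∀ j ∈ J, ∃ r, IsLevel r (φ j (g • x)) := by
    intro x hx g hg j hj
    refine exists_isLevel_of_dyadicCost_lt_top (lt_of_le_of_lt ?_
      (lt_of_le_of_lt hcost (by finiteness)))
    refine le_trans ?_ (Finset.single_le_sum (f := fun x => ∑ p ∈ F i ×ˢ J,
      dyadicCost (C (f p.2 (p.1 • x) - s))) (fun _ _ => zero_le) hx)
    exact Finset.single_le_sum (f := fun p : Γ × X => dyadicCost (C (f p.2 (p.1 • x) - s)))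
      (fun _ _ => zero_le) (Finset.mk_mem_product hg hj)
  have hmain := log_card_le hcY π hπeq φ (fun j x => hC01 _) J (F i) (E i) h0 R hR hn hθ hθ1 K δ
    _ hVcov ?_ (hsep i) hlev B (Finset.union_subset (Finset.filter_subset _ _)
      (Finset.filter_subset _ _)) ?_ _ hrank
  · have hpos : 0 < coverNum (coverJoin (F i) U) ∨ coverNum (coverJoin (F i) U) = 0 := by omega
    have hlogE : Real.log (coverNum (coverJoin (F i) U)) ≤ Real.log (E i).card := by
      rcases hpos with h | h
      · exact Real.log_le_log (by exact_mod_cast h) (by exact_mod_cast hEc i)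
      · rw [h]; simpa using Real.log_natCast_nonneg _
    refine hlogE.trans (hmain.trans ?_)
    rw [← hm, ← hD]
    have hFc : (0 : ℝ) ≤ (F i).card := Nat.cast_nonneg _
    have t1 : (F i).card * m * (4 * θ) ≤ ε / 4 * (F i).card := by nlinarith
    have t2 : B.card * m * D ≤ ε / 2 * (F i).card := by
      calc B.card * m * D ≤ (2 * η * (F i).card) * m * D := by gcongr
        _ = (2 * η * m * D) * (F i).card := by ring
        _ ≤ _ := mul_le_mul_of_nonneg_right hηε hFc
    have t3 : (-Real.log θ + Real.log 4) / n * (2 * M * (F i).card) ≤ ε / 4 * (F i).card := by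
      rw [← mul_assoc]; exact mul_le_mul_of_nonneg_right hnε hFc
    linarith
  · rintro _ ⟨c, rfl⟩ y hy y' hy'
    rw [Metric.mem_ball] at hy hy'
    have := dist_triangle_right y y' c
    linarith
  · intro g hg hgB
    simp only [hB, Finset.mem_union, Finset.mem_filter, hg, true_and, not_or, not_not,
      not_exists, not_and] at hgB
    exact hgB

lemma topEnt_le_of_predictable {Γ X Y : Type*} [Group Γ] [Countable Γ]
    [MetricSpace X] [CompactSpace X] [MulAction Γ X]
    [MetricSpace Y] [CompactSpace Y] [MulAction Γ Y]
    (hcX : ∀ g : Γ, Continuous fun x : X => g • x)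
    (hcY : ∀ g : Γ, Continuous fun y : Y => g • y)
    (π : X → Y) (hπc : Continuous π)
    (hπeq : ∀ (g : Γ) (x : X), π (g • x) = g • π x)
    (ν : Measure (Γ × Γ → Bool)) (hν : IsInvRandomOrder ν)
    (hpred : ∀ f : ContinuousMap X ℝ, ∀ᵐ R ∂ν,
      f ∈ closure (Algebra.adjoin ℝ
        ({h : ContinuousMap X ℝ | ∃ g : Γ, R (g, 1) = true ∧ h = f.comp ⟨fun x => g • x, hcX g⟩}
          ∪ Set.range fun k : ContinuousMap Y ℝ => k.comp ⟨π, hπc⟩) :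
            Set (ContinuousMap X ℝ)))
    (F : ℕ → Finset Γ) (hF : IsFolner F) : topEnt Γ X F ≤ topEnt Γ Y F := by
  refine iSup₂_le fun U hU => ?_
  by_contra! hlt
  obtain ⟨c, hc, hc'⟩ := ENNReal.lt_iff_exists_nnreal_btwn.1 hlt
  obtain ⟨d, hd, hd'⟩ := ENNReal.lt_iff_exists_nnreal_btwn.1 hc'
  have hcd : (c : ℝ) < d := by exact_mod_cast hd
  -- pass to a subsequence along which the cover `U` has exponential rate above `d`
  obtain ⟨ψ, hψ, hψU⟩ := extraction_of_frequently_atTop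
    (frequently_lt_of_lt_limsup (by isBoundedDefault) hd')
  have hFψ : IsFolner (F ∘ ψ) :=
    ⟨fun i => hF.1 _, fun g => (hF.2 g).comp hψ.tendsto_atTop⟩
  obtain ⟨V, hV, hfreq⟩ := exists_cover_frequently hcX hcY π hπc hπeq ν hν hpred (F ∘ ψ) hFψ U hU
    (d - c) (by linarith)
  have hVlt : limsup (fun i => ENNReal.ofReal
      (Real.log (coverNum (coverJoin (F i) V)) / (F i).card)) atTop < c :=
    lt_of_le_of_lt (le_iSup₂ (f := fun (U : Set (Set Y)) (_ : IsOpenCover U) =>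
      Filter.limsup (fun i => ENNReal.ofReal
        (Real.log (coverNum (coverJoin (F i) U)) / (F i).card)) atTop) V hV) hc
  have hev := hψ.tendsto_atTop.eventually (eventually_lt_of_limsup_lt hVlt)
  obtain ⟨i, hi, hi'⟩ := (hfreq.and_eventually hev).exists
  have hpos : (0 : ℝ) < (F (ψ i)).card := by exact_mod_cast (hF.1 _).card_pos
  have h1 : (d : ℝ) < Real.log (coverNum (coverJoin (F (ψ i)) U)) / (F (ψ i)).card := by
    have h : (d : ℝ≥0∞) < ENNReal.ofReal
      (Real.log (coverNum (coverJoin (F (ψ i)) U)) / (F (ψ i)).card) := hψU i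
    rw [← ENNReal.ofReal_coe_nnreal] at h
    exact (ENNReal.ofReal_lt_ofReal_iff_of_nonneg d.2).1 h
  have h2 : Real.log (coverNum (coverJoin (F (ψ i)) V)) / (F (ψ i)).card < (c : ℝ) := by
    have h : ENNReal.ofReal
      (Real.log (coverNum (coverJoin (F (ψ i)) V)) / (F (ψ i)).card) < (c : ℝ≥0∞) := hi'
    rw [← ENNReal.ofReal_coe_nnreal] at h
    exact (ENNReal.ofReal_lt_ofReal_iff_of_nonneg
      (div_nonneg (Real.log_natCast_nonneg _) hpos.le)).1 h
  rw [lt_div_iff₀ hpos] at h1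
  rw [div_lt_iff₀ hpos] at h2
  simp only [Function.comp_apply] at hi
  linarith

/-- **Relative predictability implies equality of entropies.**
Let `Γ` be a countable amenable group acting by homeomorphisms on compact metric spaces
`X` and `Y`, with a continuous `Γ`-equivariant surjection `π : X → Y`.  If there is a
`Γ`-invariant Borel probability measure `ν` on `Ord(Γ)` such that for every `f ∈ C(X)`
and `ν`-a.e. order `≺`, the function `f` lies in the closed subalgebra of `C(X)` generated
by `{f ∘ g : g ≺ 1}` together with `π*(C(Y))`, then `h_Γ(X) = h_Γ(Y)` (along any Følner
sequence). -/
theorem relatively_predictable_implies_equal_entropy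
    {Γ X Y : Type*} [Group Γ] [Countable Γ]
    [MetricSpace X] [CompactSpace X] [MulAction Γ X]
    [MetricSpace Y] [CompactSpace Y] [MulAction Γ Y]
    (hcX : ∀ g : Γ, Continuous fun x : X => g • x)
    (hcY : ∀ g : Γ, Continuous fun y : Y => g • y)
    (hamen : ∃ F : ℕ → Finset Γ, IsFolner F)
    (π : X → Y) (hπc : Continuous π) (hπsurj : Function.Surjective π)
    (hπeq : ∀ (g : Γ) (x : X), π (g • x) = g • π x)
    (ν : Measure (Γ × Γ → Bool)) (hν : IsInvRandomOrder ν)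
    (hpred : ∀ f : ContinuousMap X ℝ, ∀ᵐ R ∂ν,
      f ∈ closure (Algebra.adjoin ℝ
        ({h : ContinuousMap X ℝ | ∃ g : Γ, R (g, 1) = true ∧ h = f.comp ⟨fun x => g • x, hcX g⟩}
          ∪ Set.range fun k : ContinuousMap Y ℝ => k.comp ⟨π, hπc⟩) :
            Set (ContinuousMap X ℝ))) :
    ∀ F : ℕ → Finset Γ, IsFolner F → topEnt Γ X F = topEnt Γ Y F := by
  intro F hF
  exact le_antisymm (topEnt_le_of_predictable hcX hcY π hπc hπeq ν hν hpred F hF)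
    (topEnt_factor_le hcX π hπc hπsurj hπeq F)
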